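/- arXiv:1903.11582 — 3 statements merged into one kernel-verified Lean document; each statement's English description precedes it below -/
import Mathlib

section
/- Let F_y be a probability distribution on ℝ and F_λ a probability distribution on [0,∞), both with finite second moments. Then there exists a function η : ℝ → ℝ (depending only on F_y and F_λ) which is odd (η(−t) = −η(t) for all t) and satisfies 0 ≤ η(t₁) − η(t₂) ≤ t₁ − t₂ for all t₁ ≥ t₂, such that for every pair of converging sequences y⁽ᵖ⁾ ∈ ℝᵖ and λ⁽ᵖ⁾ ∈ ℝᵖ (each λ⁽ᵖ⁾ having nonnegative nondecreasing entries) whose empirical measures converge weakly to F_y and F_λ respectively and which satisfy (1/p)‖y⁽ᵖ⁾‖² → E_{F_y}[Y²] and (1/p)‖λ⁽ᵖ⁾‖² → E_{F_λ}[λ²], one has (1/p)‖Prox_{λ⁽ᵖ⁾}(y⁽ᵖ⁾) − η(y⁽ᵖ⁾)‖² → 0 as p → ∞, where η(y⁽ᵖ⁾) denotes the coordinatewise application of η. -/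
open MeasureTheory Filter Finset Topology

/-- The nondecreasing rearrangement of the absolute values of the entries of `x`. -/
noncomputable def sortedAbs {p : ℕ} (x : Fin p → ℝ) : Fin p → ℝ :=
  fun i => |x (Tuple.sort (fun j => |x j|) i)|

/-- The sorted ℓ1 norm `J_λ(x) = ∑ λ_i |x|_(i)`. -/
noncomputable def sortedL1 {p : ℕ} (lam x : Fin p → ℝ) : ℝ :=
  ∑ i, lam i * sortedAbs x i

/-- The SLOPE objective `(1/2)‖y - x‖² + J_λ(x)`. -/
noncomputable def slopeObj {p : ℕ} (lam y x : Fin p → ℝ) : ℝ :=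
  (1 / 2) * ∑ i, (y i - x i) ^ 2 + sortedL1 lam x

open Classical in
/-- The SLOPE proximal operator: the (unique) minimizer of the SLOPE objective. -/
noncomputable def slopeProx {p : ℕ} (lam y : Fin p → ℝ) : Fin p → ℝ :=
  if h : ∃ x : Fin p → ℝ, ∀ z : Fin p → ℝ, slopeObj lam y x ≤ slopeObj lam y z
  then h.choose else y

/-- The empirical measures `(1/p) ∑ δ_{x_i}` of the sequence of vectors `x⁽ᵖ⁾` converge
weakly to the probability measure `μ` (tested against bounded continuous functions). -/
def EmpConverges (x : (p : ℕ) → Fin p → ℝ) (μ : Measure ℝ) : Prop :=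
  ∀ f : BoundedContinuousFunction ℝ ℝ,
    Tendsto (fun p => (∑ i, f (x p i)) / (p : ℝ)) atTop (𝓝 (∫ t, f t ∂μ))


lemma sortedL1_ge {p : ℕ} {lam : Fin p → ℝ} (hm : Monotone lam) (x : Fin p → ℝ)
    (σ : Equiv.Perm (Fin p)) : ∑ i, lam i * |x (σ i)| ≤ sortedL1 lam x := by
  have hs : Monotone (sortedAbs x) := Tuple.monotone_sort (fun j => |x j|)
  have hmv : Monovary lam (sortedAbs x) := hm.monovary hs
  have := hmv.sum_mul_comp_perm_le_sum_mul (σ := σ.trans (Tuple.sort (fun j => |x j|)).symm)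
  simpa [sortedAbs, sortedL1] using this

lemma sortedL1_perm_le {p : ℕ} {lam : Fin p → ℝ} (hm : Monotone lam) (x x' : Fin p → ℝ)
    (π : Equiv.Perm (Fin p)) (h : ∀ k, |x' k| = |x (π k)|) : sortedL1 lam x' ≤ sortedL1 lam x := by
  have := sortedL1_ge hm x ((Tuple.sort (fun j => |x' j|)).trans π)
  simpa [sortedL1, sortedAbs, h] using this

lemma sortedL1_convex {p : ℕ} {lam : Fin p → ℝ} (h0 : ∀ i, 0 ≤ lam i) (hm : Monotone lam)
    (x z : Fin p → ℝ) (t : ℝ) (ht0 : 0 ≤ t) (ht1 : t ≤ 1) :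
    sortedL1 lam (fun i => (1 - t) * x i + t * z i)
      ≤ (1 - t) * sortedL1 lam x + t * sortedL1 lam z := by
  set σ := Tuple.sort (fun j => |(1 - t) * x j + t * z j|) with hσ
  have h1 := mul_le_mul_of_nonneg_left (sortedL1_ge hm x σ) (by linarith : 0 ≤ 1 - t)
  have h2 := mul_le_mul_of_nonneg_left (sortedL1_ge hm z σ) ht0
  refine le_trans ?_ (add_le_add h1 h2)
  rw [sortedL1, Finset.mul_sum, Finset.mul_sum, ← Finset.sum_add_distrib]
  refine Finset.sum_le_sum fun i _ => ?_
  have h3 : sortedAbs (fun i => (1 - t) * x i + t * z i) i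
      = |(1 - t) * x (σ i) + t * z (σ i)| := rfl
  have h4 : |(1 - t) * x (σ i) + t * z (σ i)| ≤ (1 - t) * |x (σ i)| + t * |z (σ i)| := by
    refine (abs_add_le _ _).trans ?_
    rw [abs_mul, abs_mul, abs_of_nonneg ht0, abs_of_nonneg (by linarith : 0 ≤ 1 - t)]
  rw [h3]
  nlinarith [mul_le_mul_of_nonneg_left h4 (h0 i)]

lemma sortedL1_continuous {p : ℕ} {lam : Fin p → ℝ} (hm : Monotone lam) :
    Continuous (sortedL1 lam) := by
  have : sortedL1 lam = fun x => (Finset.univ : Finset (Equiv.Perm (Fin p))).sup'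
      Finset.univ_nonempty (fun σ => ∑ i, lam i * |x (σ i)|) := by
    funext x
    apply le_antisymm
    · exact Finset.le_sup' (fun σ : Equiv.Perm (Fin p) => ∑ i, lam i * |x (σ i)|)
        (Finset.mem_univ (Tuple.sort (fun j => |x j|)))
    · exact Finset.sup'_le _ _ fun σ _ => sortedL1_ge hm x σ
  rw [this]
  apply Continuous.finset_sup'_apply
  intro σ _
  fun_prop

lemma sortedL1_nonneg {p : ℕ} {lam : Fin p → ℝ} (h0 : ∀ i, 0 ≤ lam i) (x : Fin p → ℝ) :
    0 ≤ sortedL1 lam x :=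
  Finset.sum_nonneg fun i _ => mul_nonneg (h0 i) (abs_nonneg _)

lemma exists_min {p : ℕ} {lam : Fin p → ℝ} (h0 : ∀ i, 0 ≤ lam i) (hm : Monotone lam)
    (y : Fin p → ℝ) :
    ∃ x : Fin p → ℝ, ∀ z : Fin p → ℝ, slopeObj lam y x ≤ slopeObj lam y z := by
  have hc : Continuous (slopeObj lam y) := by
    have := sortedL1_continuous hm
    unfold slopeObj
    fun_prop
  refine hc.exists_forall_le' y ?_
  set M := slopeObj lam y y with hM
  have hb : (Metric.closedBall y (Real.sqrt (2 * M)))ᶜ ∈ cocompact (Fin p → ℝ) :=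
    (isCompact_closedBall _ _).compl_mem_cocompact
  filter_upwards [hb] with z hz
  by_contra hlt
  push Not at hlt
  apply hz
  rw [Metric.mem_closedBall, dist_pi_le_iff (Real.sqrt_nonneg _)]
  intro i
  have h1 : (y i - z i) ^ 2 ≤ ∑ i, (y i - z i) ^ 2 :=
    Finset.single_le_sum (f := fun i => (y i - z i) ^ 2) (fun _ _ => sq_nonneg _)
      (Finset.mem_univ i)
  have h2 := sortedL1_nonneg h0 z
  unfold slopeObj at hlt
  rw [dist_comm, Real.dist_eq]
  apply Real.abs_le_sqrt
  linarith

lemma slopeProx_spec {p : ℕ} {lam : Fin p → ℝ} (h0 : ∀ i, 0 ≤ lam i) (hm : Monotone lam)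
    (y : Fin p → ℝ) (z : Fin p → ℝ) :
    slopeObj lam y (slopeProx lam y) ≤ slopeObj lam y z := by
  have h := exists_min h0 hm y
  unfold slopeProx
  rw [dif_pos h]
  exact h.choose_spec z

lemma slope_strong {p : ℕ} {lam : Fin p → ℝ} (h0 : ∀ i, 0 ≤ lam i) (hm : Monotone lam)
    (y x z : Fin p → ℝ) (hx : ∀ z : Fin p → ℝ, slopeObj lam y x ≤ slopeObj lam y z) :
    slopeObj lam y x + (1 / 2) * ∑ i, (x i - z i) ^ 2 ≤ slopeObj lam y z := by
  set D := ∑ i, (x i - z i) ^ 2 with hD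
  have key : ∀ t : ℝ, 0 < t → t ≤ 1 → (1 / 2) * (1 - t) * D ≤ slopeObj lam y z - slopeObj lam y x := by
    intro t ht ht1
    have h1 := hx (fun i => (1 - t) * x i + t * z i)
    have h2 := sortedL1_convex h0 hm x z t ht.le ht1
    have h3 : ∑ i, (y i - ((1 - t) * x i + t * z i)) ^ 2
        = (1 - t) * ∑ i, (y i - x i) ^ 2 + t * ∑ i, (y i - z i) ^ 2 - t * (1 - t) * D := by
      rw [hD, Finset.mul_sum, Finset.mul_sum, Finset.mul_sum, ← Finset.sum_add_distrib,
        ← Finset.sum_sub_distrib]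
      exact Finset.sum_congr rfl fun i _ => by ring
    unfold slopeObj at h1 ⊢
    rw [h3] at h1
    have : t * ((1 / 2) * (1 - t) * D) ≤ t * (1 / 2 * ∑ i, (y i - z i) ^ 2 + sortedL1 lam z -
        (1 / 2 * ∑ i, (y i - x i) ^ 2 + sortedL1 lam x)) := by nlinarith
    exact le_of_mul_le_mul_left this ht
  have hlim : Tendsto (fun t : ℝ => (1 / 2) * (1 - t) * D) (𝓝[>] 0) (𝓝 ((1 / 2) * (1 - 0) * D)) := by
    apply Tendsto.mono_left _ nhdsWithin_le_nhds
    exact Continuous.tendsto (by fun_prop) 0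
  have := le_of_tendsto hlim (b := slopeObj lam y z - slopeObj lam y x) (by
    filter_upwards [Ioc_mem_nhdsGT (zero_lt_one' ℝ)] with t ht
    exact key t ht.1 ht.2)
  linarith

/-- signed swap inequality -/
lemma slope_swap {p : ℕ} {lam : Fin p → ℝ} (h0 : ∀ i, 0 ≤ lam i) (hm : Monotone lam)
    (y x : Fin p → ℝ) (hx : ∀ z : Fin p → ℝ, slopeObj lam y x ≤ slopeObj lam y z)
    (i j : Fin p) (e : ℝ) (he : e = 1 ∨ e = -1) :
    (x i - e * x j) ^ 2 ≤ (x i - e * x j) * (y i - e * y j) := by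
  set z : Fin p → ℝ := fun k => if k = i then e * x j else if k = j then e * x i else x k with hz
  have h1 := slope_strong h0 hm y x z hx
  have habs : |e| = 1 := by rcases he with rfl | rfl <;> simp
  have he2 : e ^ 2 = 1 := by rcases he with rfl | rfl <;> norm_num
  have h2 : sortedL1 lam z ≤ sortedL1 lam x := by
    apply sortedL1_perm_le hm x z (Equiv.swap i j)
    intro k
    simp only [hz]
    split_ifs with h h'
    · subst h; simp [abs_mul, habs]
    · subst h'; simp [abs_mul, habs]
    · rw [Equiv.swap_apply_of_ne_of_ne h h']
  unfold slopeObj at h1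
  have h3 : ∑ k, ((y k - x k) ^ 2 + (x k - z k) ^ 2 - (y k - z k) ^ 2) ≤ 0 := by
    rw [Finset.sum_sub_distrib, Finset.sum_add_distrib]; linarith
  have h4 : ∀ k, (y k - x k) ^ 2 + (x k - z k) ^ 2 - (y k - z k) ^ 2
      = 2 * (x k - z k) * (x k - y k) := fun k => by ring
  simp only [h4] at h3
  by_cases hij : i = j
  · subst hij
    rw [Finset.sum_eq_single i] at h3
    · simp only [hz, if_true] at h3
      rcases he with h | h <;> rw [h] at h3 ⊢ <;> nlinarith
    · intro b _ hb; simp [hz, hb]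
    · simp
  · rw [← Finset.sum_subset (Finset.subset_univ {i, j}), Finset.sum_pair hij] at h3
    · simp only [hz, if_true, if_neg (Ne.symm hij)] at h3
      rcases he with h | h <;> rw [h] at h3 ⊢ <;> nlinarith
    · intro b _ hb
      simp only [Finset.mem_insert, Finset.mem_singleton, not_or] at hb
      simp [hz, hb.1, hb.2]

/-- The class of odd, nondecreasing, 1-Lipschitz functions. -/
def KK : Set (ℝ → ℝ) :=
  {η | (∀ t, η (-t) = -η t) ∧
      (∀ t₁ t₂ : ℝ, t₂ ≤ t₁ → 0 ≤ η t₁ - η t₂ ∧ η t₁ - η t₂ ≤ t₁ - t₂)}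

lemma extend_aux {ι : Type*} [Fintype ι] [Nonempty ι] (s f : ι → ℝ)
    (h : ∀ i j, (f i - f j) ^ 2 ≤ (f i - f j) * (s i - s j)) :
    ∃ g : ℝ → ℝ, (∀ i, g (s i) = f i) ∧
      (∀ t₁ t₂ : ℝ, t₂ ≤ t₁ → 0 ≤ g t₁ - g t₂ ∧ g t₁ - g t₂ ≤ t₁ - t₂) := by
  refine ⟨fun t => Finset.univ.sup' Finset.univ_nonempty (fun i => f i - max (s i - t) 0), ?_, ?_⟩
  · intro i
    apply le_antisymm
    · refine Finset.sup'_le _ _ fun j _ => ?_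
      have := h j i
      rcases le_total (s j - s i) 0 with h' | h'
      · rw [max_eq_right h']; nlinarith
      · rw [max_eq_left h']; nlinarith
    · refine le_trans ?_ (Finset.le_sup' (fun j => f j - max (s j - s i) 0) (Finset.mem_univ i))
      simp
  · intro t₁ t₂ ht
    constructor
    · rw [sub_nonneg]
      refine Finset.sup'_le _ _ fun j _ => ?_
      refine le_trans ?_ (Finset.le_sup' (fun j => f j - max (s j - t₁) 0) (Finset.mem_univ j))
      gcongr
    · rw [sub_le_iff_le_add]
      refine Finset.sup'_le _ _ fun j _ => ?_
      have := (Finset.le_sup' (fun j => f j - max (s j - t₂) 0) (Finset.mem_univ j))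
      have h2 : max (s j - t₂) 0 ≤ max (s j - t₁) 0 + (t₁ - t₂) := by
        apply max_le
        · linarith [le_max_left (s j - t₁) 0]
        · linarith [le_max_right (s j - t₁) 0]
      linarith

lemma prox_eq {p : ℕ} [NeZero p] {lam : Fin p → ℝ} (h0 : ∀ i, 0 ≤ lam i) (hm : Monotone lam)
    (y : Fin p → ℝ) : ∃ η ∈ KK, ∀ i, slopeProx lam y i = η (y i) := by
  set x := slopeProx lam y
  have hx : ∀ z : Fin p → ℝ, slopeObj lam y x ≤ slopeObj lam y z := slopeProx_spec h0 hm y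
  let sg : Bool → ℝ := fun b => if b then 1 else -1
  obtain ⟨g, hg, hL⟩ := extend_aux (ι := Fin p × Bool) (fun a => sg a.2 * y a.1)
    (fun a => sg a.2 * x a.1) (by
      rintro ⟨i, a⟩ ⟨j, b⟩
      have h1 := slope_swap h0 hm y x hx i j 1 (Or.inl rfl)
      have h2 := slope_swap h0 hm y x hx i j (-1) (Or.inr rfl)
      cases a <;> cases b <;> simp [sg] <;> nlinarith)
  refine ⟨fun t => (g t - g (-t)) / 2, ⟨fun t => by simp; ring, fun t₁ t₂ ht => ?_⟩, fun i => ?_⟩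
  · have h1 := hL t₁ t₂ ht
    have h2 := hL (-t₂) (-t₁) (by linarith)
    constructor <;> dsimp only <;> linarith
  · have h1 := hg (i, true)
    have h2 := hg (i, false)
    simp [sg] at h1 h2
    dsimp only
    rw [h1, h2]; ring

/-- Step function of a vector on the unit interval. -/
noncomputable def stp {p : ℕ} (c : Fin p → ℝ) (u : ℝ) : ℝ :=
  if h : ⌊(p : ℝ) * u⌋₊ < p then c ⟨⌊(p : ℝ) * u⌋₊, h⟩ else 0

noncomputable abbrev m01 : Measure ℝ := volume.restrict (Set.Ioo (0 : ℝ) 1)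

lemma floor_lt' {p : ℕ} (hp : 0 < p) {u : ℝ} (hu : u ∈ Set.Ioo (0 : ℝ) 1) :
    ⌊(p : ℝ) * u⌋₊ < p := by
  have : (0 : ℝ) < p := by exact_mod_cast hp
  rw [Nat.floor_lt (mul_nonneg this.le hu.1.le)]
  nlinarith [hu.2]

lemma stp_measurable {p : ℕ} (c : Fin p → ℝ) : Measurable (stp c) := by
  have h1 : Measurable (fun n : ℕ => if h : n < p then c ⟨n, h⟩ else 0) := measurable_from_top
  exact h1.comp (Nat.measurable_floor.comp (measurable_const.mul measurable_id))

lemma stp_eq_sum {p : ℕ} (hp : 0 < p) (c : Fin p → ℝ) {u : ℝ} (hu : u ∈ Set.Ioo (0 : ℝ) 1) :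
    stp c u = ∑ i : Fin p, (Set.Ico ((i : ℝ) / p) (((i : ℝ) + 1) / p)).indicator (fun _ => c i) u := by
  have hp' : (0 : ℝ) < p := by exact_mod_cast hp
  have hf := floor_lt' hp hu
  unfold stp
  rw [dif_pos hf, Finset.sum_eq_single ⟨⌊(p : ℝ) * u⌋₊, hf⟩]
  · rw [Set.indicator_of_mem]
    constructor
    · rw [div_le_iff₀ hp', mul_comm u]
      exact Nat.floor_le (mul_nonneg hp'.le hu.1.le)
    · rw [lt_div_iff₀ hp', mul_comm u]
      exact Nat.lt_floor_add_one _
  · intro j _ hj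
    rw [Set.indicator_of_notMem]
    rintro ⟨h1, h2⟩
    apply hj
    ext
    simp only
    symm
    rw [Nat.floor_eq_iff (mul_nonneg hp'.le hu.1.le)]
    rw [div_le_iff₀ hp'] at h1
    rw [lt_div_iff₀ hp'] at h2
    constructor <;> linarith
  · simp

lemma stp_int {p : ℕ} (hp : 0 < p) (c : Fin p → ℝ) :
    Integrable (stp c) m01 ∧ ∫ u, stp c u ∂m01 = (∑ i, c i) / p := by
  have hp' : (0 : ℝ) < p := by exact_mod_cast hp
  have hae : stp c =ᵐ[m01] fun u => ∑ i : Fin p,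
      (Set.Ico ((i : ℝ) / p) (((i : ℝ) + 1) / p)).indicator (fun _ => c i) u := by
    filter_upwards [ae_restrict_mem measurableSet_Ioo] with u hu
    exact stp_eq_sum hp c hu
  have hi : ∀ i ∈ (Finset.univ : Finset (Fin p)), Integrable
      ((Set.Ico ((i : ℝ) / p) (((i : ℝ) + 1) / p)).indicator (fun _ => c i)) m01 := fun i _ =>
    (integrable_const _).indicator measurableSet_Ico
  constructor
  · rw [integrable_congr hae]
    exact integrable_finsetSum _ hi
  · rw [integral_congr_ae hae, integral_finsetSum _ hi, Finset.sum_div]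
    refine Finset.sum_congr rfl fun i _ => ?_
    rw [integral_indicator measurableSet_Ico, setIntegral_const, smul_eq_mul]
    have : m01.real (Set.Ico ((i : ℝ) / p) (((i : ℝ) + 1) / p)) = 1 / p := by
      unfold m01
      rw [measureReal_restrict_apply measurableSet_Ico]
      have h1 : volume.real (Set.Ico ((i : ℝ) / p) (((i : ℝ) + 1) / p) ∩ Set.Ioo 0 1)
          = volume.real (Set.Ioo ((i : ℝ) / p) (((i : ℝ) + 1) / p)) := by
        rw [measureReal_def, measureReal_def]
        congr 1
        apply measure_congr
        have h2 : (Set.Ico ((i : ℝ) / p) (((i : ℝ) + 1) / p) ∩ Set.Ioo 0 1 : Set ℝ)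
          =ᵐ[volume] (Set.Ioo ((i : ℝ) / p) (((i : ℝ) + 1) / p) ∩ Set.Ioo 0 1 : Set ℝ) :=
          Filter.EventuallyEq.inter Ioo_ae_eq_Ico.symm (by rfl)
        refine h2.trans ?_
        rw [Set.inter_eq_left.2]
        · exact Filter.EventuallyEq.refl _ _
        apply Set.Ioo_subset_Ioo
        · positivity
        · rw [div_le_one hp']
          exact_mod_cast i.2
      rw [h1, Real.volume_real_Ioo_of_le (by gcongr; linarith)]
      field_simp
      ring
    rw [this]; ring

noncomputable def qf (ν : Measure ℝ) (u : ℝ) : ℝ :=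
  sInf {x | 0 ≤ x ∧ u ≤ ProbabilityTheory.cdf ν x}

section
variable (ν : Measure ℝ)

lemma qf_bdd (u : ℝ) : BddBelow {x | 0 ≤ x ∧ u ≤ ProbabilityTheory.cdf ν x} :=
  ⟨0, fun _ hx => hx.1⟩

lemma qf_nonempty {u : ℝ} (hu : u < 1) :
    {x | 0 ≤ x ∧ u ≤ ProbabilityTheory.cdf ν x}.Nonempty := by
  have h1 := (ProbabilityTheory.tendsto_cdf_atTop ν).eventually (lt_mem_nhds hu)
  obtain ⟨x, hx, hx'⟩ := (h1.and (eventually_ge_atTop 0)).exists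
  exact ⟨x, hx', hx.le⟩

lemma qf_nonneg (u : ℝ) : 0 ≤ qf ν u := Real.sInf_nonneg fun _ hx => hx.1

lemma qf_le_iff {u x : ℝ} (hu : u < 1) (hx : 0 ≤ x) :
    qf ν u ≤ x ↔ u ≤ ProbabilityTheory.cdf ν x := by
  constructor
  · intro h
    have h1 : ∀ y, x < y → u ≤ ProbabilityTheory.cdf ν y := by
      intro y hy
      obtain ⟨z, hz, hzy⟩ := exists_lt_of_csInf_lt (qf_nonempty ν hu) (lt_of_le_of_lt h hy)
      exact hz.2.trans ((ProbabilityTheory.cdf ν).mono hzy.le)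
    have h2 := ((ProbabilityTheory.cdf ν).right_continuous x).mono_left
      (nhdsWithin_mono x Set.Ioi_subset_Ici_self)
    refine ge_of_tendsto h2 ?_
    filter_upwards [self_mem_nhdsWithin] with y hy using h1 y hy
  · intro h
    exact csInf_le (qf_bdd ν u) ⟨hx, h⟩

lemma qf_mono : MonotoneOn (qf ν) (Set.Ioo 0 1) := by
  intro u hu v hv huv
  exact csInf_le_csInf (qf_bdd ν u) (qf_nonempty ν hv.2) fun x hx => ⟨hx.1, huv.trans hx.2⟩

lemma qf_aemeas : AEMeasurable (qf ν) m01 :=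
  aemeasurable_restrict_of_monotoneOn measurableSet_Ioo (qf_mono ν)

lemma qf_law [IsProbabilityMeasure ν] (h0 : ν (Set.Iio 0) = 0) : Measure.map (qf ν) m01 = ν := by
  apply MeasureTheory.Measure.ext_of_Iic
  intro x
  rw [Measure.map_apply_of_aemeasurable (qf_aemeas ν) measurableSet_Iic]
  rcases lt_or_ge x 0 with hx | hx
  · have h1 : qf ν ⁻¹' Set.Iic x = ∅ := by
      ext u
      simp only [Set.mem_preimage, Set.mem_Iic, Set.mem_empty_iff_false, iff_false, not_le]
      exact hx.trans_le (qf_nonneg ν u)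
    rw [h1, measure_empty]
    symm
    exact measure_mono_null (fun t ht => lt_of_le_of_lt ht hx) h0
  · unfold m01
    rw [Measure.restrict_apply₀']
    swap
    · exact measurableSet_Ioo.nullMeasurableSet
    have h1 : qf ν ⁻¹' Set.Iic x ∩ Set.Ioo 0 1 = Set.Iic (ProbabilityTheory.cdf ν x) ∩ Set.Ioo 0 1 := by
      ext u
      simp only [Set.mem_inter_iff, Set.mem_preimage, Set.mem_Iic]
      constructor
      · rintro ⟨a, b⟩; exact ⟨(qf_le_iff ν b.2 hx).1 a, b⟩
      · rintro ⟨a, b⟩; exact ⟨(qf_le_iff ν b.2 hx).2 a, b⟩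
    have h2 : (Set.Iic (ProbabilityTheory.cdf ν x) ∩ Set.Ioo 0 1 : Set ℝ) =ᵐ[volume]
        (Set.Ioc 0 (ProbabilityTheory.cdf ν x) : Set ℝ) := by
      have h3 : (Set.Iic (ProbabilityTheory.cdf ν x) ∩ Set.Ioo 0 1 : Set ℝ) =ᵐ[volume]
        (Set.Iic (ProbabilityTheory.cdf ν x) ∩ Set.Ioc 0 1 : Set ℝ) :=
          Filter.EventuallyEq.inter (by rfl) Ioo_ae_eq_Ioc
      refine h3.trans ?_
      have : (Set.Iic (ProbabilityTheory.cdf ν x) ∩ Set.Ioc 0 1 : Set ℝ) =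
        (Set.Ioc 0 (ProbabilityTheory.cdf ν x) : Set ℝ) := by
        ext u
        simp only [Set.mem_inter_iff, Set.mem_Iic, Set.mem_Ioc]
        have := ProbabilityTheory.cdf_le_one ν x
        constructor
        · rintro ⟨a, b, c⟩; exact ⟨b, a⟩
        · rintro ⟨a, b⟩; exact ⟨b, a, b.trans this⟩
      rw [this]
      exact Filter.EventuallyEq.refl _ _
    rw [h1, measure_congr h2, Real.volume_Ioc, sub_zero, ProbabilityTheory.cdf_eq_real,
      ofReal_measureReal]

lemma qf_sq [IsProbabilityMeasure ν] (h0 : ν (Set.Iio 0) = 0)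
    (h2 : Integrable (fun t => t ^ 2) ν) :
    Integrable (fun u => qf ν u ^ 2) m01 ∧ ∫ u, qf ν u ^ 2 ∂m01 = ∫ t, t ^ 2 ∂ν := by
  have hl := qf_law ν h0
  have hm : AEStronglyMeasurable (fun t : ℝ => t ^ 2) (Measure.map (qf ν) m01) := by
    fun_prop
  constructor
  · rw [← hl] at h2
    exact (integrable_map_measure hm (qf_aemeas ν)).1 h2
  · conv_rhs => rw [← hl]
    rw [integral_map (qf_aemeas ν) hm]

end

/-- ramp test function: 1 below x₀, 0 above x₁. -/
lemma exists_ramp {x₀ x₁ : ℝ} (h : x₀ < x₁) : ∃ f : BoundedContinuousFunction ℝ ℝ,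
    (∀ t, 0 ≤ f t) ∧ (∀ t, f t ≤ 1) ∧ (∀ t, t ≤ x₀ → f t = 1) ∧ (∀ t, x₁ ≤ t → f t = 0) := by
  have hpos : 0 < x₁ - x₀ := by linarith
  refine ⟨BoundedContinuousFunction.ofNormedAddCommGroup
    (fun t => max 0 (min 1 ((x₁ - t) / (x₁ - x₀)))) (by fun_prop) 1 ?_, ?_, ?_, ?_, ?_⟩
  · intro t
    rw [Real.norm_eq_abs, abs_of_nonneg (le_max_left _ _)]
    exact max_le zero_le_one (min_le_left _ _)
  · intro t; exact le_max_left _ _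
  · intro t; exact max_le zero_le_one (min_le_left _ _)
  · intro t ht
    change max 0 (min 1 ((x₁ - t) / (x₁ - x₀))) = 1
    rw [min_eq_left, max_eq_right zero_le_one]
    rw [le_div_iff₀ hpos]; linarith
  · intro t ht
    change max 0 (min 1 ((x₁ - t) / (x₁ - x₀))) = 0
    apply max_eq_left
    refine (min_le_right _ _).trans ?_
    exact div_nonpos_of_nonpos_of_nonneg (by linarith) hpos.le

lemma integral_ramp_le (ν : Measure ℝ) [IsProbabilityMeasure ν] {f : BoundedContinuousFunction ℝ ℝ}
    {x₁ : ℝ} (h1 : ∀ t, f t ≤ 1) (h2 : ∀ t, x₁ ≤ t → f t = 0) :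
    ∫ t, f t ∂ν ≤ ProbabilityTheory.cdf ν x₁ := by
  rw [ProbabilityTheory.cdf_eq_real, ← integral_indicator_one measurableSet_Iic]
  refine integral_mono (f.integrable ν) ((integrable_const 1).indicator measurableSet_Iic) fun t => ?_
  by_cases ht : t ≤ x₁
  · simpa [Set.indicator, ht] using h1 t
  · simpa [Set.indicator, ht] using (h2 t (le_of_not_ge ht)).le

lemma le_integral_ramp (ν : Measure ℝ) [IsProbabilityMeasure ν] {f : BoundedContinuousFunction ℝ ℝ}
    {x₀ : ℝ} (h1 : ∀ t, 0 ≤ f t) (h2 : ∀ t, t ≤ x₀ → f t = 1) :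
    ProbabilityTheory.cdf ν x₀ ≤ ∫ t, f t ∂ν := by
  rw [ProbabilityTheory.cdf_eq_real, ← integral_indicator_one measurableSet_Iic]
  refine integral_mono ((integrable_const 1).indicator measurableSet_Iic) (f.integrable ν) fun t => ?_
  by_cases ht : t ≤ x₀
  · simpa [Set.indicator, ht] using (h2 t ht).ge
  · simpa [Set.indicator, ht] using h1 t

lemma stp_tendsto (ν : Measure ℝ) [IsProbabilityMeasure ν] (a : (p : ℕ) → Fin p → ℝ)
    (ha0 : ∀ p i, 0 ≤ a p i) (ham : ∀ p, Monotone (a p)) (hE : EmpConverges a ν)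
    {u : ℝ} (hu : u ∈ Set.Ioo (0 : ℝ) 1) (hc : ContinuousWithinAt (qf ν) (Set.Ioo 0 1) u) :
    Tendsto (fun p => stp (a p) u) atTop (𝓝 (qf ν u)) := by
  rw [tendsto_order]
  constructor
  · intro x₀ hx₀
    rcases lt_or_ge x₀ 0 with hneg | hx₀0
    · refine Eventually.of_forall fun p => hneg.trans_le ?_
      unfold stp; split_ifs
      · exact ha0 _ _
      · exact le_rfl
    obtain ⟨x₁, h01, h1q⟩ := exists_between hx₀
    obtain ⟨f, hf0, hf1, hfl, hfr⟩ := exists_ramp h01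
    have hlt : ∫ t, f t ∂ν < u := by
      refine lt_of_le_of_lt (integral_ramp_le ν hf1 hfr) ?_
      by_contra hcon
      push Not at hcon
      exact absurd ((qf_le_iff ν hu.2 (hx₀0.trans h01.le)).2 hcon) (not_le.2 h1q)
    filter_upwards [(hE f).eventually (gt_mem_nhds hlt), eventually_gt_atTop 0] with p hp hp0
    have hp' : (0 : ℝ) < p := by exact_mod_cast hp0
    have hfl' := floor_lt' hp0 hu
    by_contra hcon
    push Not at hcon
    unfold stp at hcon
    rw [dif_pos hfl'] at hcon
    rw [div_lt_iff₀ hp'] at hp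
    set k : Fin p := ⟨⌊(p : ℝ) * u⌋₊, hfl'⟩ with hk
    have h1 : (((Finset.Iic k).card : ℕ) : ℝ) ≤ ∑ i, f (a p i) := by
      calc (((Finset.Iic k).card : ℕ) : ℝ) = ∑ i ∈ Finset.Iic k, (1 : ℝ) := by simp
        _ = ∑ i ∈ Finset.Iic k, f (a p i) := Finset.sum_congr rfl fun i hi =>
            (hfl _ ((ham p (Finset.mem_Iic.1 hi)).trans hcon)).symm
        _ ≤ _ := Finset.sum_le_univ_sum_of_nonneg fun i => hf0 _
    rw [Fin.card_Iic] at h1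
    have h2 := Nat.lt_floor_add_one ((p : ℝ) * u)
    simp only [hk] at h1
    push_cast at h1
    linarith
  · intro x₁ hx₁
    have hev : ∀ᶠ v in 𝓝[Set.Ioo 0 1] u, qf ν v < x₁ := hc.eventually (gt_mem_nhds hx₁)
    rw [IsOpen.nhdsWithin_eq isOpen_Ioo hu] at hev
    have hev2 : ∀ᶠ v in 𝓝[>] u, qf ν v < x₁ := hev.filter_mono nhdsWithin_le_nhds
    have hev3 : ∀ᶠ v in 𝓝[>] u, v ∈ Set.Ioo u 1 := Ioo_mem_nhdsGT hu.2
    obtain ⟨v, hv1, hv2⟩ := (hev2.and hev3).exists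
    obtain ⟨f, hf0, hf1, hfl, hfr⟩ := exists_ramp hv1
    have hlt : u < ∫ t, f t ∂ν :=
      lt_of_lt_of_le hv2.1 (((qf_le_iff ν hv2.2 (qf_nonneg ν v)).1 le_rfl).trans
        (le_integral_ramp ν hf0 hfl))
    filter_upwards [(hE f).eventually (lt_mem_nhds hlt), eventually_gt_atTop 0] with p hp hp0
    have hp' : (0 : ℝ) < p := by exact_mod_cast hp0
    have hfl' := floor_lt' hp0 hu
    by_contra hcon
    push Not at hcon
    unfold stp at hcon
    rw [dif_pos hfl'] at hcon
    rw [lt_div_iff₀ hp'] at hp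
    set k : Fin p := ⟨⌊(p : ℝ) * u⌋₊, hfl'⟩ with hk
    have h1 : ∑ i, f (a p i) ≤ (((Finset.Iio k).card : ℕ) : ℝ) := by
      calc ∑ i, f (a p i) = ∑ i ∈ Finset.Iio k, f (a p i) := by
            symm
            apply Finset.sum_subset (Finset.subset_univ _)
            intro i _ hi
            rw [Finset.mem_Iio, not_lt] at hi
            exact hfr _ (hcon.trans (ham p hi))
        _ ≤ ∑ i ∈ Finset.Iio k, (1 : ℝ) := Finset.sum_le_sum fun i _ => hf1 _
        _ = _ := by simp
    rw [Fin.card_Iio] at h1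
    have h2 := Nat.floor_le (mul_nonneg hp'.le hu.1.le)
    simp only [hk] at h1
    linarith

lemma stp_comp {p : ℕ} (hp : 0 < p) (c : Fin p → ℝ) (g : ℝ → ℝ) {u : ℝ}
    (hu : u ∈ Set.Ioo (0 : ℝ) 1) : stp (fun i => g (c i)) u = g (stp c u) := by
  unfold stp
  rw [dif_pos (floor_lt' hp hu), dif_pos (floor_lt' hp hu)]

lemma stp_comp2 {p : ℕ} (hp : 0 < p) (c d : Fin p → ℝ) (g : ℝ → ℝ → ℝ) {u : ℝ}
    (hu : u ∈ Set.Ioo (0 : ℝ) 1) : stp (fun i => g (c i) (d i)) u = g (stp c u) (stp d u) := by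
  unfold stp
  rw [dif_pos (floor_lt' hp hu), dif_pos (floor_lt' hp hu), dif_pos (floor_lt' hp hu)]

lemma stp_int2 {p : ℕ} (hp : 0 < p) (c d : Fin p → ℝ) (g : ℝ → ℝ → ℝ) :
    Integrable (fun u => g (stp c u) (stp d u)) m01 ∧
      ∫ u, g (stp c u) (stp d u) ∂m01 = (∑ i, g (c i) (d i)) / p := by
  have hae : stp (fun i => g (c i) (d i)) =ᵐ[m01] fun u => g (stp c u) (stp d u) := by
    filter_upwards [ae_restrict_mem measurableSet_Ioo] with u hu
    exact stp_comp2 hp c d g hu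
  have := stp_int hp (fun i => g (c i) (d i))
  exact ⟨(integrable_congr hae).1 this.1, (integral_congr_ae hae) ▸ this.2⟩

lemma stp_L2 (ν : Measure ℝ) [IsProbabilityMeasure ν] (h0 : ν (Set.Iio 0) = 0)
    (h2 : Integrable (fun t => t ^ 2) ν) (a : (p : ℕ) → Fin p → ℝ)
    (ha0 : ∀ p i, 0 ≤ a p i) (ham : ∀ p, Monotone (a p)) (hE : EmpConverges a ν)
    (hS : Tendsto (fun p => (∑ i, (a p i) ^ 2) / (p : ℝ)) atTop (𝓝 (∫ t, t ^ 2 ∂ν))) :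
    Tendsto (fun p => ∫ u, (stp (a p) u - qf ν u) ^ 2 ∂m01) atTop (𝓝 0) := by
  obtain ⟨hq1, hq2⟩ := qf_sq ν h0 h2
  have hqm := qf_aemeas ν
  have hae : ∀ᵐ u ∂m01, Tendsto (fun p => stp (a p) u) atTop (𝓝 (qf ν u)) := by
    have hcount := (qf_mono ν).countable_not_continuousWithinAt
    have hnull : ∀ᵐ u ∂m01, u ∉ {x | x ∈ Set.Ioo (0 : ℝ) 1 ∧ ¬ContinuousWithinAt (qf ν) (Set.Ioo 0 1) x} :=
      hcount.ae_notMem _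
    filter_upwards [hnull, ae_restrict_mem measurableSet_Ioo] with u hu hu'
    refine stp_tendsto ν a ha0 ham hE hu' ?_
    by_contra hcon
    exact hu ⟨hu', hcon⟩
  have hst0 : ∀ p u, 0 ≤ stp (a p) u := by
    intro p u
    unfold stp; split_ifs
    · exact ha0 _ _
    · exact le_rfl
  have hdom : Tendsto (fun p => ∫ u, max (qf ν u ^ 2 - stp (a p) u ^ 2) 0 ∂m01) atTop
      (𝓝 (∫ u, (0 : ℝ) ∂m01)) := by
    refine MeasureTheory.tendsto_integral_of_dominated_convergence (fun u => qf ν u ^ 2) ?_ hq1 ?_ ?_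
    · intro p
      have := (stp_measurable (a p)).aemeasurable (μ := m01)
      exact AEMeasurable.aestronglyMeasurable (by fun_prop)
    · intro p
      refine Eventually.of_forall fun u => ?_
      rw [Real.norm_eq_abs, abs_of_nonneg (le_max_right _ _)]
      exact max_le (by nlinarith [sq_nonneg (stp (a p) u)]) (sq_nonneg _)
    · filter_upwards [hae] with u hu
      have : Tendsto (fun p => max (qf ν u ^ 2 - stp (a p) u ^ 2) 0) atTop
          (𝓝 (max (qf ν u ^ 2 - qf ν u ^ 2) 0)) :=
        ((hu.pow 2).const_sub _).max tendsto_const_nhds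
      simpa using this
  rw [integral_zero] at hdom
  have hup : Tendsto (fun p => (∑ i, (a p i) ^ 2) / (p : ℝ) - ∫ t, t ^ 2 ∂ν
      + 2 * ∫ u, max (qf ν u ^ 2 - stp (a p) u ^ 2) 0 ∂m01) atTop (𝓝 0) := by
    have := (hS.sub_const (∫ t, t ^ 2 ∂ν)).add (hdom.const_mul 2)
    simpa using this
  refine tendsto_of_tendsto_of_tendsto_of_le_of_le' tendsto_const_nhds hup ?_ ?_
  · exact Eventually.of_forall fun p => integral_nonneg fun u => sq_nonneg _
  · filter_upwards [eventually_gt_atTop 0] with p hp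
    obtain ⟨hi1, hi2⟩ := stp_int2 hp (a p) (a p) (fun s _ => s ^ 2)
    have hmx : Integrable (fun u => max (qf ν u ^ 2 - stp (a p) u ^ 2) 0) m01 :=
      (hq1.sub hi1).pos_part
    have w1 : Integrable (fun u => stp (a p) u ^ 2 - qf ν u ^ 2) m01 := hi1.sub hq1
    rw [← hi2, ← hq2, ← integral_sub hi1 hq1, ← integral_const_mul, ← integral_add w1 (hmx.const_mul 2)]
    refine integral_mono_of_nonneg (Eventually.of_forall fun u => sq_nonneg _)
      (w1.add (hmx.const_mul 2)) (Eventually.of_forall fun u => ?_)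
    have h1 := hst0 p u
    have h2 := qf_nonneg ν u
    rcases le_total (qf ν u) (stp (a p) u) with h | h
    · have : 0 ≤ max (qf ν u ^ 2 - stp (a p) u ^ 2) 0 := le_max_right _ _
      nlinarith
    · have : qf ν u ^ 2 - stp (a p) u ^ 2 ≤ max (qf ν u ^ 2 - stp (a p) u ^ 2) 0 := le_max_left _ _
      nlinarith

lemma KK_zero {η : ℝ → ℝ} (h : η ∈ KK) : η 0 = 0 := by
  have := h.1 0
  rw [neg_zero] at this
  linarith

lemma KK_lip {η : ℝ → ℝ} (h : η ∈ KK) (s t : ℝ) : |η s - η t| ≤ |s - t| := by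
  rcases le_total s t with hst | hst
  · have := h.2 t s hst
    rw [abs_of_nonpos (by linarith), abs_of_nonpos (by linarith)]; linarith
  · have := h.2 s t hst
    rw [abs_of_nonneg (by linarith), abs_of_nonneg (by linarith)]; linarith

lemma KK_lip' {η : ℝ → ℝ} (h : η ∈ KK) (s t : ℝ) : |(s - η s) - (t - η t)| ≤ |s - t| := by
  rcases le_total s t with hst | hst
  · have := h.2 t s hst
    rw [abs_of_nonpos (by linarith), abs_of_nonpos (by linarith)]; linarith
  · have := h.2 s t hst
    rw [abs_of_nonneg (by linarith), abs_of_nonneg (by linarith)]; linarith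

lemma KK_abs {η : ℝ → ℝ} (h : η ∈ KK) (t : ℝ) : |η t| = η |t| := by
  have h0 := KK_zero h
  rcases le_total 0 t with ht | ht
  · have := (h.2 t 0 ht).1
    rw [abs_of_nonneg ht, abs_of_nonneg (by linarith)]
  · have := (h.2 0 t ht).1
    rw [abs_of_nonpos ht, h.1, abs_of_nonpos (by linarith)]

lemma KK_cont {η : ℝ → ℝ} (h : η ∈ KK) : Continuous η := by
  have : LipschitzWith 1 η := LipschitzWith.of_dist_le_mul fun s t => by
    simpa [Real.dist_eq] using KK_lip h s t
  exact this.continuous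

lemma KK_compact : IsCompact KK := by
  have h1 : IsCompact (Set.univ.pi fun t : ℝ => Set.Icc (-|t|) |t|) :=
    isCompact_univ_pi fun t => isCompact_Icc
  refine h1.of_isClosed_subset ?_ ?_
  · unfold KK
    simp only [Set.ofPred_and, Set.ofPred_forall]
    refine IsClosed.inter ?_ ?_
    · exact isClosed_iInter fun t => isClosed_eq (by fun_prop) (by fun_prop)
    · exact isClosed_iInter fun t => isClosed_iInter fun s => isClosed_iInter fun _ =>
        (isClosed_le (by fun_prop) (by fun_prop)).inter (isClosed_le (by fun_prop) (by fun_prop))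
  · intro η hη t _
    have := KK_lip hη t 0
    rw [KK_zero hη, sub_zero, sub_zero] at this
    exact abs_le.1 this

lemma KK_id : (fun t : ℝ => t) ∈ KK := ⟨fun _ => rfl, fun t₁ t₂ h => ⟨by linarith, le_rfl⟩⟩

/-- Pointwise loss. -/
noncomputable def HH (η : ℝ → ℝ) (a l : ℝ) : ℝ := (1 / 2) * (a - η a) ^ 2 + l * η a

lemma two_mul_le_delta (x z δ : ℝ) (hδ : 0 < δ) : x * z ≤ (1 / δ) * x ^ 2 / 2 + δ * z ^ 2 / 2 := by
  have : 0 ≤ (1 / δ) * (x - δ * z) ^ 2 := by positivity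
  have h2 : (1 / δ) * (x - δ * z) ^ 2 = (1 / δ) * x ^ 2 - 2 * x * z + δ * z ^ 2 := by
    field_simp
    ring
  linarith

lemma HH_diff {η : ℝ → ℝ} (h : η ∈ KK) (a l b m δ : ℝ) (hδ : 0 < δ) :
    |HH η a l - HH η b m| ≤ (1 + 1 / δ) * ((a - b) ^ 2 + (l - m) ^ 2) + δ * (b ^ 2 + m ^ 2) := by
  have h0 := KK_zero h
  have e1 := KK_lip h a b
  have e2 := KK_lip' h a b
  have e3 := KK_lip h b 0
  have e4 := KK_lip' h b 0
  rw [h0] at e3 e4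
  simp only [sub_zero] at e3 e4
  have key : HH η a l - HH η b m = (1 / 2) * ((a - η a) - (b - η b)) ^ 2
      + ((a - η a) - (b - η b)) * (b - η b) + (l - m) * (η a - η b) + (l - m) * η b
      + m * (η a - η b) := by unfold HH; ring
  rw [key]
  set A := (a - η a) - (b - η b)
  set B := η a - η b
  have f1 : |(1 / 2) * A ^ 2| ≤ (1 / 2) * (a - b) ^ 2 := by
    rw [abs_of_nonneg (by positivity)]
    have := sq_le_sq.2 e2
    linarith
  have f2 : |A * (b - η b)| ≤ |a - b| * |b| := by rw [abs_mul]; gcongr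
  have f3 : |(l - m) * B| ≤ |l - m| * |a - b| := by rw [abs_mul]; gcongr
  have f4 : |(l - m) * η b| ≤ |l - m| * |b| := by rw [abs_mul]; gcongr
  have f5 : |m * B| ≤ |a - b| * |m| := by rw [abs_mul, mul_comm |a - b|]; gcongr
  have g2 := two_mul_le_delta |a - b| |b| δ hδ
  have g4 := two_mul_le_delta |l - m| |b| δ hδ
  have g5 := two_mul_le_delta |a - b| |m| δ hδ
  have g3 : |l - m| * |a - b| ≤ ((l - m) ^ 2 + (a - b) ^ 2) / 2 := by
    rw [← sq_abs (l - m), ← sq_abs (a - b)]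
    nlinarith [sq_nonneg (|l - m| - |a - b|)]
  simp only [sq_abs] at g2 g4 g5
  have t1 := abs_add_le (1 / 2 * A ^ 2 + A * (b - η b) + (l - m) * B + (l - m) * η b) (m * B)
  have t2 := abs_add_le (1 / 2 * A ^ 2 + A * (b - η b) + (l - m) * B) ((l - m) * η b)
  have t3 := abs_add_le (1 / 2 * A ^ 2 + A * (b - η b)) ((l - m) * B)
  have t4 := abs_add_le (1 / 2 * A ^ 2) (A * (b - η b))
  have p1 : 0 ≤ 1 / δ * (l - m) ^ 2 := by positivity
  have p2 : 0 ≤ δ * m ^ 2 := by positivity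
  have p3 : 0 ≤ (l - m) ^ 2 := by positivity
  nlinarith

lemma HH_bound {η : ℝ → ℝ} (h : η ∈ KK) (b m : ℝ) : |HH η b m| ≤ 2 * (b ^ 2 + m ^ 2) := by
  have e := HH_diff h b m 0 0 1 one_pos
  have : HH η 0 0 = 0 := by simp [HH, KK_zero h]
  rw [this] at e
  norm_num at e
  linarith

lemma sortedAbs_KK {p : ℕ} {η : ℝ → ℝ} (h : η ∈ KK) (y : Fin p → ℝ) (i : Fin p) :
    sortedAbs (fun j => η (y j)) i = η (sortedAbs y i) := by
  have h1 : Monotone ((fun j => |η (y j)|) ∘ (Tuple.sort (fun j => |y j|))) := by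
    intro j k hjk
    have := Tuple.monotone_sort (fun j => |y j|) hjk
    simp only [Function.comp, KK_abs h] at this ⊢
    linarith [(h.2 _ _ this).1]
  have h2 := congrFun (Tuple.comp_sort_eq_comp_iff_monotone.2 h1) i
  simp only [Function.comp] at h2
  unfold sortedAbs
  rw [← h2, KK_abs h]

lemma sum_sortedAbs {p : ℕ} (y : Fin p → ℝ) (g : ℝ → ℝ) :
    ∑ i, g (sortedAbs y i) = ∑ i, g |y i| :=
  Equiv.sum_comp (Tuple.sort (fun j => |y j|)) (fun i => g |y i|)

lemma slopeObj_KK {p : ℕ} {η : ℝ → ℝ} (h : η ∈ KK) (lam y : Fin p → ℝ) :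
    slopeObj lam y (fun j => η (y j)) = ∑ i, HH η (sortedAbs y i) (lam i) := by
  unfold slopeObj sortedL1 HH
  rw [Finset.sum_add_distrib, ← Finset.mul_sum]
  congr 1
  · congr 1
    rw [sum_sortedAbs y (fun t => (t - η t) ^ 2)]
    refine Finset.sum_congr rfl fun i _ => ?_
    rcases abs_choice (y i) with h' | h' <;> rw [h']
    rw [h.1]; ring
  · exact Finset.sum_congr rfl fun i _ => by rw [sortedAbs_KK h]

lemma obj_close {q l : ℝ → ℝ} (hqm : AEMeasurable q m01) (hlm : AEMeasurable l m01)
    (hq : Integrable (fun u => q u ^ 2) m01) (hl : Integrable (fun u => l u ^ 2) m01)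
    {p : ℕ} (hp : 0 < p) (a lam : Fin p → ℝ) {η : ℝ → ℝ} (h : η ∈ KK) {δ : ℝ} (hδ : 0 < δ) :
    |(∑ i, HH η (a i) (lam i)) / p - ∫ u, HH η (q u) (l u) ∂m01| ≤
      (1 + 1 / δ) * (∫ u, (stp a u - q u) ^ 2 ∂m01 + ∫ u, (stp lam u - l u) ^ 2 ∂m01)
      + δ * (∫ u, q u ^ 2 ∂m01 + ∫ u, l u ^ 2 ∂m01) := by
  have hηm := (KK_cont h).measurable
  obtain ⟨i1, i2⟩ := stp_int2 hp a lam (HH η)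
  have hHm : AEMeasurable (fun u => HH η (q u) (l u)) m01 := by
    unfold HH; fun_prop
  have hHi : Integrable (fun u => HH η (q u) (l u)) m01 :=
    Integrable.mono' ((hq.add hl).const_mul 2) hHm.aestronglyMeasurable
      (Eventually.of_forall fun u => HH_bound h _ _)
  have hsq : ∀ (c : Fin p → ℝ) (r : ℝ → ℝ), AEMeasurable r m01 → Integrable (fun u => r u ^ 2) m01 →
      Integrable (fun u => (stp c u - r u) ^ 2) m01 := by
    intro c r hr hr2
    have hc := (stp_int2 hp c c (fun s _ => s ^ 2)).1
    have hcm := (stp_measurable c).aemeasurable (μ := m01)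
    refine Integrable.mono' ((hc.add hr2).const_mul 2) (AEMeasurable.aestronglyMeasurable (by fun_prop))
      (Eventually.of_forall fun u => ?_)
    rw [Real.norm_eq_abs, abs_of_nonneg (sq_nonneg _)]
    simp only [Pi.add_apply]
    nlinarith [sq_nonneg (stp c u + r u)]
  have s1 := hsq a q hqm hq
  have s2 := hsq lam l hlm hl
  have w1 : Integrable (fun u => (1 + 1 / δ) * ((stp a u - q u) ^ 2 + (stp lam u - l u) ^ 2)) m01 :=
    (s1.add s2).const_mul _
  have w2 : Integrable (fun u => δ * (q u ^ 2 + l u ^ 2)) m01 := (hq.add hl).const_mul _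
  rw [← i2, ← integral_sub i1 hHi, ← integral_add s1 s2, ← integral_add hq hl,
    ← integral_const_mul, ← integral_const_mul,
    ← integral_add w1 w2]
  refine (abs_integral_le_integral_abs).trans ?_
  refine integral_mono (i1.sub hHi).abs (w1.add w2)
    fun u => ?_
  exact HH_diff h _ _ _ _ δ hδ

lemma sortedAbs_mono {p : ℕ} (y : Fin p → ℝ) : Monotone (sortedAbs y) :=
  Tuple.monotone_sort (fun j => |y j|)

theorem statement0
    (μy μlam : Measure ℝ)
    (hμy : IsProbabilityMeasure μy) (hμlam : IsProbabilityMeasure μlam)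
    (hlam_supp : μlam (Set.Iio 0) = 0)
    (hy2 : Integrable (fun t => t ^ 2) μy)
    (hlam2 : Integrable (fun t => t ^ 2) μlam) :
    ∃ η : ℝ → ℝ,
      (∀ t, η (-t) = -η t) ∧
      (∀ t₁ t₂ : ℝ, t₂ ≤ t₁ → 0 ≤ η t₁ - η t₂ ∧ η t₁ - η t₂ ≤ t₁ - t₂) ∧
      ∀ y lam : (p : ℕ) → Fin p → ℝ,
        (∀ p i, 0 ≤ lam p i) → (∀ p, Monotone (lam p)) →
        EmpConverges y μy → EmpConverges lam μlam →
        Tendsto (fun p => (∑ i, (y p i) ^ 2) / (p : ℝ)) atTop (𝓝 (∫ t, t ^ 2 ∂μy)) →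
        Tendsto (fun p => (∑ i, (lam p i) ^ 2) / (p : ℝ)) atTop (𝓝 (∫ t, t ^ 2 ∂μlam)) →
        Tendsto (fun p => (∑ i, (slopeProx (lam p) (y p) i - η (y p i)) ^ 2) / (p : ℝ))
          atTop (𝓝 0) := by
  -- the law of |Y|
  set ν : Measure ℝ := Measure.map (fun t => |t|) μy with hν
  have habs : Measurable (fun t : ℝ => |t|) := by fun_prop
  have hνp : IsProbabilityMeasure ν := Measure.isProbabilityMeasure_map habs.aemeasurable
  have hν0 : ν (Set.Iio 0) = 0 := by
    rw [hν, Measure.map_apply habs measurableSet_Iio]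
    have : (fun t : ℝ => |t|) ⁻¹' Set.Iio 0 = ∅ := by
      ext t; simp
    rw [this, measure_empty]
  have hν2 : Integrable (fun t => t ^ 2) ν := by
    rw [hν, integrable_map_measure (by fun_prop) habs.aemeasurable]
    simpa [Function.comp_def] using hy2
  have hν2' : ∫ t, t ^ 2 ∂ν = ∫ t, t ^ 2 ∂μy := by
    rw [hν, integral_map habs.aemeasurable (by fun_prop)]
    simp
  set q := qf ν
  set l := qf μlam
  have hq := (qf_sq ν hν0 hν2).1
  have hl := (qf_sq μlam hlam_supp hlam2).1
  have hqm := qf_aemeas ν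
  have hlm := qf_aemeas μlam
  -- uniform closeness
  have unif : ∀ y lam : (p : ℕ) → Fin p → ℝ,
        (∀ p i, 0 ≤ lam p i) → (∀ p, Monotone (lam p)) →
        EmpConverges y μy → EmpConverges lam μlam →
        Tendsto (fun p => (∑ i, (y p i) ^ 2) / (p : ℝ)) atTop (𝓝 (∫ t, t ^ 2 ∂μy)) →
        Tendsto (fun p => (∑ i, (lam p i) ^ 2) / (p : ℝ)) atTop (𝓝 (∫ t, t ^ 2 ∂μlam)) →
        ∀ ε > 0, ∀ᶠ p : ℕ in atTop, ∀ η ∈ KK,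
          |(∑ i, HH η (sortedAbs (y p) i) (lam p i)) / (p : ℝ) - ∫ u, HH η (q u) (l u) ∂m01| < ε := by
    intro y lam hl0 hlmon hEy hEl hy hlam ε hε
    have hE' : EmpConverges (fun p => sortedAbs (y p)) ν := by
      intro f
      have := hEy (f.compContinuous ⟨fun t => |t|, by fun_prop⟩)
      rw [hν, integral_map habs.aemeasurable f.continuous.aestronglyMeasurable]
      refine this.congr fun p => ?_
      rw [sum_sortedAbs (y p) f]
      rfl
    have hS' : Tendsto (fun p => (∑ i, (sortedAbs (y p) i) ^ 2) / (p : ℝ)) atTop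
        (𝓝 (∫ t, t ^ 2 ∂ν)) := by
      rw [hν2']
      refine hy.congr fun p => ?_
      rw [sum_sortedAbs (y p) (fun t => t ^ 2)]
      simp
    have c1 := stp_L2 ν hν0 hν2 (fun p => sortedAbs (y p)) (fun p i => abs_nonneg _)
      (fun p => sortedAbs_mono _) hE' hS'
    have c2 := stp_L2 μlam hlam_supp hlam2 lam hl0 hlmon hEl hlam
    set C := ∫ u, q u ^ 2 ∂m01 + ∫ u, l u ^ 2 ∂m01 with hC
    have hC0 : 0 ≤ C := add_nonneg (integral_nonneg fun _ => sq_nonneg _)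
      (integral_nonneg fun _ => sq_nonneg _)
    set δ := ε / (2 * (C + 1)) with hδ
    have hδ0 : 0 < δ := by positivity
    have hδC : δ * C < ε / 2 + 0 := by
      have : δ * (C + 1) = ε / 2 := by rw [hδ]; field_simp
      linarith
    have c3 := ((c1.add c2).const_mul (1 + 1 / δ))
    simp only [add_zero, mul_zero] at c3
    filter_upwards [c3.eventually (gt_mem_nhds (half_pos hε)), eventually_gt_atTop 0] with p hp hp0 η hη
    have := obj_close hqm hlm hq hl hp0 (sortedAbs (y p)) (lam p) hη hδ0
    linarith
  by_cases hex : ∃ y lam : (p : ℕ) → Fin p → ℝ,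
        (∀ p i, 0 ≤ lam p i) ∧ (∀ p, Monotone (lam p)) ∧
        EmpConverges y μy ∧ EmpConverges lam μlam ∧
        Tendsto (fun p => (∑ i, (y p i) ^ 2) / (p : ℝ)) atTop (𝓝 (∫ t, t ^ 2 ∂μy)) ∧
        Tendsto (fun p => (∑ i, (lam p i) ^ 2) / (p : ℝ)) atTop (𝓝 (∫ t, t ^ 2 ∂μlam))
  swap
  · refine ⟨fun t => t, KK_id.1, KK_id.2, ?_⟩
    intro y lam h1 h2 h3 h4 h5 h6
    exact absurd ⟨y, lam, h1, h2, h3, h4, h5, h6⟩ hex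
  obtain ⟨y₀, lam₀, h1, h2, h3, h4, h5, h6⟩ := hex
  have u0 := unif y₀ lam₀ h1 h2 h3 h4 h5 h6
  have hcont : ContinuousOn (fun η : ℝ → ℝ => ∫ u, HH η (q u) (l u) ∂m01) KK := by
    have hT : TendstoUniformlyOn (fun (p : ℕ) (η : ℝ → ℝ) =>
        (∑ i, HH η (sortedAbs (y₀ p) i) (lam₀ p i)) / (p : ℝ))
        (fun η : ℝ → ℝ => ∫ u, HH η (q u) (l u) ∂m01) atTop KK := by
      rw [Metric.tendstoUniformlyOn_iff]
      intro ε hε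
      filter_upwards [u0 ε hε] with p hp η hη
      rw [dist_comm, Real.dist_eq]
      exact hp η hη
    refine hT.continuousOn (Frequently.of_forall fun p => ?_)
    apply Continuous.continuousOn
    unfold HH
    fun_prop
  obtain ⟨η, hη, hmin⟩ := KK_compact.exists_isMinOn ⟨_, KK_id⟩ hcont
  refine ⟨η, hη.1, hη.2, ?_⟩
  intro y lam h1 h2 h3 h4 h5 h6
  have u1 := unif y lam h1 h2 h3 h4 h5 h6
  rw [Metric.tendsto_atTop']
  intro ε hε
  obtain ⟨N, hN⟩ := eventually_atTop.1 ((u1 (ε / 4) (by positivity)).and (eventually_gt_atTop 0))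
  refine ⟨N, fun p hp => ?_⟩
  obtain ⟨hb, hp0⟩ := hN p hp.le
  have hp' : (0 : ℝ) < p := by exact_mod_cast hp0
  have : NeZero p := ⟨hp0.ne'⟩
  obtain ⟨ηp, hηp, hpe⟩ := prox_eq (h1 p) (h2 p) (y p)
  have hs := slope_strong (h1 p) (h2 p) (y p) (slopeProx (lam p) (y p)) (fun j => η (y p j))
    (slopeProx_spec (h1 p) (h2 p) (y p))
  have hfe : slopeProx (lam p) (y p) = fun j => ηp (y p j) := funext hpe
  have ho1 := slopeObj_KK hη (lam p) (y p)
  have ho2 := slopeObj_KK hηp (lam p) (y p)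
  rw [← hfe] at ho2
  rw [ho1, ho2] at hs
  have b1 := abs_lt.1 (hb η hη)
  have b2 := abs_lt.1 (hb ηp hηp)
  have b3 : ∫ u, HH η (q u) (l u) ∂m01 ≤ ∫ u, HH ηp (q u) (l u) ∂m01 := hmin hηp
  have hs' := div_le_div_of_nonneg_right hs hp'.le
  rw [add_div, mul_div_assoc] at hs'
  have hnn : 0 ≤ (∑ i, (slopeProx (lam p) (y p) i - η (y p i)) ^ 2) / (p : ℝ) :=
    div_nonneg (Finset.sum_nonneg fun _ _ => sq_nonneg _) hp'.le
  rw [Real.dist_eq, sub_zero, abs_of_nonneg hnn]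
  linarith
end

section
/- In the setting of the context, there exists a constant c > 0, not depending on p, such that for every ε ∈ (0, 1/2), the probability of the event { sup over all v ∈ ℝᵖ with ‖v‖ ≤ K√n of |L(v) − L̃(v)| < c·ε } tends to 1 as p → ∞. -/
open MeasureTheory Filter Finset Topology ProbabilityTheory

/-- The random function `L(v)` from the CGMT auxiliary analysis. -/
noncomputable def Lfun {n p : ℕ} (w : Fin n → ℝ) (β lam : Fin p → ℝ)
    (g : Fin n → ℝ) (h : Fin p → ℝ) (v : Fin p → ℝ) : ℝ :=
  (1 / 2) * (max (Real.sqrt ((∑ i, (v i) ^ 2) / n * ((∑ j, (g j) ^ 2) / n)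
      + (∑ j, (w j) ^ 2) / n
      + 2 * (Real.sqrt (∑ i, (v i) ^ 2) / Real.sqrt n) * ((∑ j, g j * w j) / n))
    - (∑ i, h i * v i) / n) 0) ^ 2
  + sortedL1 lam (fun i => v i + β i) / n

/-- The deterministic-noise approximation `L̃(v)`. -/
noncomputable def Ltil {n p : ℕ} (σw : ℝ) (β lam : Fin p → ℝ)
    (h : Fin p → ℝ) (v : Fin p → ℝ) : ℝ :=
  (1 / 2) * (max (Real.sqrt ((∑ i, (v i) ^ 2) / n + σw ^ 2)
    - (∑ i, h i * v i) / n) 0) ^ 2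
  + sortedL1 lam (fun i => v i + β i) / n

lemma aux_sqrt (a b η : ℝ) (hb : 0 ≤ b) (hη : 0 ≤ η) (h : |a - b| ≤ η ^ 2) :
    |Real.sqrt a - Real.sqrt b| ≤ η := by
  obtain ⟨h1, h2⟩ := abs_le.1 h
  have hB := Real.sqrt_nonneg b
  have hA := Real.sqrt_nonneg a
  have e1 : Real.sqrt a ≤ Real.sqrt b + η := by
    apply Real.sqrt_le_iff.2 ⟨by positivity, ?_⟩
    nlinarith [Real.sq_sqrt hb, mul_nonneg hB hη]
  have e2 : Real.sqrt b ≤ Real.sqrt a + η := by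
    apply Real.sqrt_le_iff.2 ⟨by positivity, ?_⟩
    rcases le_total 0 a with ha | ha
    · nlinarith [Real.sq_sqrt ha, mul_nonneg hA hη]
    · rw [Real.sqrt_eq_zero_of_nonpos ha]
      nlinarith
  rw [abs_le]
  constructor <;> linarith

lemma aux_pos (A B t η : ℝ) (hA : 0 ≤ A) (hB : 0 ≤ B) (h : |A - B| ≤ η) :
    |(1 / 2) * (max (A - t) 0) ^ 2 - (1 / 2) * (max (B - t) 0) ^ 2|
      ≤ η * (2 * B + η + 2 * |t|) / 2 := by
  have hη : 0 ≤ η := (abs_nonneg _).trans h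
  have h1 : |max (A - t) 0 - max (B - t) 0| ≤ η := by
    refine (abs_max_sub_max_le_abs _ _ _).trans ?_
    rw [sub_sub_sub_cancel_right]
    exact h
  have hx : 0 ≤ max (A - t) 0 := le_max_right _ _
  have hy : 0 ≤ max (B - t) 0 := le_max_right _ _
  have ht := neg_abs_le t
  have ht0 := abs_nonneg t
  have hx' : max (A - t) 0 ≤ B + η + |t| := by
    have := (abs_le.1 h).2
    apply max_le <;> linarith
  have hy' : max (B - t) 0 ≤ B + |t| := by
    apply max_le <;> linarith
  have e : (1 / 2) * (max (A - t) 0) ^ 2 - (1 / 2) * (max (B - t) 0) ^ 2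
      = (max (A - t) 0 - max (B - t) 0) * (max (A - t) 0 + max (B - t) 0) / 2 := by ring
  rw [e, abs_div, abs_mul, abs_of_nonneg (add_nonneg hx hy), abs_two]
  have : |max (A - t) 0 - max (B - t) 0| * (max (A - t) 0 + max (B - t) 0)
      ≤ η * (2 * B + η + 2 * |t|) :=
    mul_le_mul h1 (by linarith) (add_nonneg hx hy) hη
  linarith

lemma aux_det {n p : ℕ} (hn : 0 < n) (σ K M κ η : ℝ) (hσ : 0 ≤ σ) (hK : 0 < K)
    (hη : 0 ≤ η) (hκη : (K ^ 2 + 1 + 2 * K) * κ ≤ η ^ 2)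
    (w : Fin n → ℝ) (β lam : Fin p → ℝ) (g : Fin n → ℝ) (h v : Fin p → ℝ)
    (hv : ∑ i, (v i) ^ 2 ≤ K ^ 2 * (n : ℝ))
    (hG : |(∑ j, (g j) ^ 2) / (n : ℝ) - 1| ≤ κ)
    (hW : |(∑ j, (w j) ^ 2) / (n : ℝ) - σ ^ 2| ≤ κ)
    (hgw : |(∑ j, g j * w j) / (n : ℝ)| ≤ κ)
    (hH : (∑ i, (h i) ^ 2) / (n : ℝ) ≤ M) :
    |Lfun w β lam g h v - Ltil (n := n) σ β lam h v|
      ≤ η * (2 * (K + σ) + η + 2 * (K * Real.sqrt M)) / 2 := by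
  have hn' : (0 : ℝ) < n := by exact_mod_cast hn
  have hVn : 0 ≤ ∑ i, (v i) ^ 2 := Finset.sum_nonneg fun i _ => sq_nonneg _
  have hHn : 0 ≤ ∑ i, (h i) ^ 2 := Finset.sum_nonneg fun i _ => sq_nonneg _
  have hV : (∑ i, (v i) ^ 2) / (n : ℝ) ≤ K ^ 2 := by rwa [div_le_iff₀ hn']
  have hV0 : 0 ≤ (∑ i, (v i) ^ 2) / (n : ℝ) := by positivity
  have hs : Real.sqrt (∑ i, (v i) ^ 2) / Real.sqrt n ≤ K := by
    rw [← Real.sqrt_div hVn]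
    exact Real.sqrt_le_iff.2 ⟨hK.le, hV⟩
  have hs0 : 0 ≤ Real.sqrt (∑ i, (v i) ^ 2) / Real.sqrt n := by positivity
  have hab : |((∑ i, (v i) ^ 2) / n * ((∑ j, (g j) ^ 2) / n)
      + (∑ j, (w j) ^ 2) / n
      + 2 * (Real.sqrt (∑ i, (v i) ^ 2) / Real.sqrt n) * ((∑ j, g j * w j) / n))
      - ((∑ i, (v i) ^ 2) / n + σ ^ 2)| ≤ η ^ 2 := by
    refine le_trans ?_ hκη
    generalize (∑ i, (v i) ^ 2) / (n : ℝ) = V at *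
    generalize (∑ j, (g j) ^ 2) / (n : ℝ) = G at *
    generalize (∑ j, (w j) ^ 2) / (n : ℝ) = W at *
    generalize (∑ j, g j * w j) / (n : ℝ) = x at *
    generalize Real.sqrt (∑ i, (v i) ^ 2) / Real.sqrt n = s at *
    have e : V * G + W + 2 * s * x - (V + σ ^ 2) = V * (G - 1) + (W - σ ^ 2) + 2 * s * x := by
      ring
    rw [e]
    have a1 : |V * (G - 1)| ≤ K ^ 2 * κ := by
      rw [abs_mul, abs_of_nonneg hV0]
      exact mul_le_mul hV hG (abs_nonneg _) (by positivity)
    have a2 : |2 * s * x| ≤ 2 * K * κ := by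
      rw [abs_mul, abs_of_nonneg (by positivity : 0 ≤ 2 * s)]
      exact mul_le_mul (by linarith) hgw (abs_nonneg _) (by positivity)
    have := abs_add_le (V * (G - 1) + (W - σ ^ 2)) (2 * s * x)
    have := abs_add_le (V * (G - 1)) (W - σ ^ 2)
    linarith
  have hsq := aux_sqrt _ _ η (by positivity) hη hab
  have hB : Real.sqrt ((∑ i, (v i) ^ 2) / n + σ ^ 2) ≤ K + σ := by
    apply Real.sqrt_le_iff.2 ⟨by positivity, ?_⟩
    nlinarith [mul_nonneg hK.le hσ]
  have hM : 0 ≤ M := le_trans (by positivity) hH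
  have ht : |(∑ i, h i * v i) / (n : ℝ)| ≤ K * Real.sqrt M := by
    apply abs_le_of_sq_le_sq _ (by positivity)
    have cs := Finset.sum_mul_sq_le_sq_mul_sq Finset.univ h v
    rw [mul_pow, Real.sq_sqrt hM, div_pow]
    calc (∑ i, h i * v i) ^ 2 / (n : ℝ) ^ 2
        ≤ ((∑ i, (h i) ^ 2) * (∑ i, (v i) ^ 2)) / (n : ℝ) ^ 2 := by gcongr
      _ = ((∑ i, (v i) ^ 2) / n) * ((∑ i, (h i) ^ 2) / n) := by
          field_simp
      _ ≤ K ^ 2 * M := mul_le_mul hV hH (by positivity) (by positivity)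
  have := aux_pos _ _ ((∑ i, h i * v i) / (n : ℝ)) η (Real.sqrt_nonneg _) (Real.sqrt_nonneg _) hsq
  unfold Lfun Ltil
  rw [add_sub_add_right_eq_sub]
  refine this.trans ?_
  gcongr

lemma aux_cheb {m : ℕ} (f : ℝ → ℝ) (hf : MemLp f 2 (gaussianReal 0 1)) (a : Fin m → ℝ)
    (t : ℝ) (ht : 0 < t) :
    (Measure.pi fun _ : Fin m => gaussianReal 0 1)
      {x | t ≤ |(∑ i, a i * f (x i)) - (∑ i, a i) * ∫ y, f y ∂(gaussianReal 0 1)|}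
      ≤ ENNReal.ofReal ((∑ i, (a i) ^ 2) * variance f (gaussianReal 0 1) / t ^ 2) := by
  have hX : ∀ i : Fin m, MemLp (fun y => a i * f y) 2 (gaussianReal 0 1) :=
    fun i => hf.const_mul (a i)
  have hX' : ∀ i : Fin m, MemLp (fun x : Fin m → ℝ => a i * f (x i)) 2
      (Measure.pi fun _ : Fin m => gaussianReal 0 1) := fun i =>
    (hX i).comp_measurePreserving (measurePreserving_eval (fun _ : Fin m => gaussianReal 0 1) i)
  have hv := variance_sum_pi (μ := fun _ : Fin m => gaussianReal 0 1) hX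
  have hS : MemLp (∑ i, fun x : Fin m → ℝ => a i * f (x i)) 2
      (Measure.pi fun _ : Fin m => gaussianReal 0 1) := memLp_finsetSum' _ fun i _ => hX' i
  have key := meas_ge_le_variance_div_sq hS ht
  rw [hv] at key
  have hm : ∫ x, (∑ i, fun x : Fin m → ℝ => a i * f (x i)) x
      ∂(Measure.pi fun _ : Fin m => gaussianReal 0 1)
      = (∑ i, a i) * ∫ y, f y ∂(gaussianReal 0 1) := by
    simp only [Finset.sum_apply]
    rw [integral_finsetSum _ fun i _ => (hX' i).integrable (by norm_num), Finset.sum_mul]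
    refine Finset.sum_congr rfl fun i _ => ?_
    rw [integral_comp_eval (μ := fun _ : Fin m => gaussianReal 0 1) (f := fun y => a i * f y)
      (hX i).1, integral_const_mul]
  rw [hm] at key
  simp only [Finset.sum_apply, variance_const_mul] at key
  rw [← Finset.sum_mul] at key
  exact key

lemma aux_memLp_sq : MemLp (fun x : ℝ => x ^ 2) 2 (gaussianReal 0 1) := by
  have h4 : MemLp (id : ℝ → ℝ) 4 (gaussianReal 0 1) :=
    memLp_id_gaussianReal' 4 (by norm_num)
  have := (memLp_two_iff_integrable_sq (μ := gaussianReal 0 1) (f := fun x : ℝ => x ^ 2)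
    (by fun_prop)).2
  apply this
  have h := h4.integrable_norm_pow (p := 4) (by norm_num)
  refine h.congr (Filter.Eventually.of_forall fun x => ?_)
  simp only [id, Real.norm_eq_abs]
  rw [← pow_mul]
  exact Even.pow_abs (by decide) x

lemma aux_mean_sq : ∫ x : ℝ, x ^ 2 ∂(gaussianReal 0 1) = 1 := by
  have h := variance_fun_id_gaussianReal (μ := 0) (v := 1)
  rw [variance_of_integral_eq_zero (by fun_prop) (by simp)] at h
  simpa using h

theorem statement17
    (δ σw K : ℝ) (hδ : 0 < δ) (hσw : 0 ≤ σw) (hK : 0 < K)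
    (n : ℕ → ℕ) (hn : Tendsto (fun p => (n p : ℝ) / (p : ℝ)) atTop (𝓝 δ))
    (w : (p : ℕ) → Fin (n p) → ℝ)
    (hw : Tendsto (fun p => (∑ j, (w p j) ^ 2) / (n p : ℝ)) atTop (𝓝 (σw ^ 2)))
    (β : (p : ℕ) → Fin p → ℝ) (C : ℝ) (hβ : ∀ p : ℕ, (∑ i, (β p i) ^ 2) / (p : ℝ) ≤ C)
    (lam : (p : ℕ) → Fin p → ℝ)
    (hlam : ∀ p i, 0 ≤ lam p i) (hlamm : ∀ p, Monotone (lam p)) :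
    ∃ c : ℝ, 0 < c ∧ ∀ ε : ℝ, 0 < ε → ε < 1 / 2 →
      Tendsto (fun p =>
        ((Measure.pi fun _ : Fin (n p) => gaussianReal 0 1).prod
          (Measure.pi fun _ : Fin p => gaussianReal 0 1))
        {gh : (Fin (n p) → ℝ) × (Fin p → ℝ) |
          (⨆ v : {v : Fin p → ℝ // ∑ i, (v i) ^ 2 ≤ K ^ 2 * (n p : ℝ)},
            |Lfun (w p) (β p) (lam p) gh.1 gh.2 v.1
              - Ltil (n := n p) σw (β p) (lam p) gh.2 v.1|) < c * ε})
        atTop (𝓝 (1 : ENNReal)) := by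
  refine ⟨1, one_pos, fun ε hε _ => ?_⟩
  -- constants
  set M : ℝ := 4 / δ with hM
  set D : ℝ := 2 * (K + σw) + 1 + 2 * (K * Real.sqrt M) with hD
  have hDpos : 0 < D := by positivity
  set η : ℝ := min 1 (ε / D) with hηd
  have hη : 0 < η := by positivity
  have hη1 : η ≤ 1 := min_le_left _ _
  have hη2 : η * D ≤ ε := by
    have : η ≤ ε / D := min_le_right _ _
    rwa [le_div_iff₀ hDpos] at this
  set κ : ℝ := η ^ 2 / (K ^ 2 + 1 + 2 * K) with hκd
  have hκ : 0 < κ := by positivity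
  have hκη : (K ^ 2 + 1 + 2 * K) * κ ≤ η ^ 2 := by
    rw [hκd]; apply le_of_eq; field_simp
  have hp : Tendsto (fun p : ℕ => (p : ℝ)) atTop atTop := tendsto_natCast_atTop_atTop
  have hnT : Tendsto (fun p => (n p : ℝ)) atTop atTop := by
    have := hn.pos_mul_atTop hδ hp
    refine this.congr' ?_
    filter_upwards [eventually_gt_atTop 0] with p hp0
    have : (p : ℝ) ≠ 0 := by positivity
    field_simp
  set V : ℝ := variance (fun x : ℝ => x ^ 2) (gaussianReal 0 1) with hV
  -- the failure bound
  set b : ℕ → ENNReal := fun p =>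
    ENNReal.ofReal (1 / (n p : ℝ) * V / κ ^ 2)
    + ENNReal.ofReal ((∑ j, (w p j) ^ 2) / (n p : ℝ) * (1 / (n p : ℝ)) / κ ^ 2)
    + ENNReal.ofReal (1 / (p : ℝ) * V / 1 ^ 2) with hb
  have hinv : Tendsto (fun p => 1 / (n p : ℝ)) atTop (𝓝 0) := by
    simp only [one_div]
    exact hnT.inv_tendsto_atTop
  have hinvp : Tendsto (fun p : ℕ => 1 / (p : ℝ)) atTop (𝓝 0) := by
    simp only [one_div]
    exact hp.inv_tendsto_atTop
  have hb0 : Tendsto b atTop (𝓝 0) := by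
    have t1 : Tendsto (fun p => 1 / (n p : ℝ) * V / κ ^ 2) atTop (𝓝 0) := by
      simpa using (hinv.mul_const V).div_const (κ ^ 2)
    have t2 : Tendsto (fun p => (∑ j, (w p j) ^ 2) / (n p : ℝ) * (1 / (n p : ℝ)) / κ ^ 2)
        atTop (𝓝 0) := by
      simpa using (hw.mul hinv).div_const (κ ^ 2)
    have t3 : Tendsto (fun p : ℕ => 1 / (p : ℝ) * V / 1 ^ 2) atTop (𝓝 0) := by
      simpa using hinvp.mul_const V
    have := ((ENNReal.tendsto_ofReal t1).add (ENNReal.tendsto_ofReal t2)).add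
      (ENNReal.tendsto_ofReal t3)
    simp only [ENNReal.ofReal_zero, add_zero] at this
    exact this
  have hlow : Tendsto (fun p => 1 - b p) atTop (𝓝 (1 : ENNReal)) := by
    simpa using ENNReal.Tendsto.sub (tendsto_const_nhds (x := (1 : ENNReal))) hb0
      (Or.inl ENNReal.one_ne_top)
  refine tendsto_of_tendsto_of_tendsto_of_le_of_le' hlow tendsto_const_nhds ?_
    (Filter.Eventually.of_forall fun p => prob_le_one)
  have hWe : ∀ᶠ p in atTop, |(∑ j, (w p j) ^ 2) / (n p : ℝ) - σw ^ 2| < κ := by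
    have := (Metric.tendsto_nhds.1 hw) κ hκ
    simpa [Real.dist_eq] using this
  have hδe : ∀ᶠ p in atTop, δ / 2 < (n p : ℝ) / (p : ℝ) :=
    hn.eventually_const_lt (by linarith)
  filter_upwards [hWe, hδe, hnT.eventually_gt_atTop 0, eventually_gt_atTop 0]
    with p hW hδp hnp hp0
  have hp0' : (0 : ℝ) < p := by exact_mod_cast hp0
  have hn0 : 0 < n p := by exact_mod_cast hnp
  set μ := ((Measure.pi fun _ : Fin (n p) => gaussianReal 0 1).prod
          (Measure.pi fun _ : Fin p => gaussianReal 0 1)) with hμ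
  set S := {gh : (Fin (n p) → ℝ) × (Fin p → ℝ) |
          (⨆ v : {v : Fin p → ℝ // ∑ i, (v i) ^ 2 ≤ K ^ 2 * (n p : ℝ)},
            |Lfun (w p) (β p) (lam p) gh.1 gh.2 v.1
              - Ltil (n := n p) σw (β p) (lam p) gh.2 v.1|) < 1 * ε} with hS
  set B1 := {g : Fin (n p) → ℝ | κ ≤ |(∑ j, (g j) ^ 2) / (n p : ℝ) - 1|} with hB1
  set B2 := {g : Fin (n p) → ℝ | κ ≤ |(∑ j, g j * w p j) / (n p : ℝ)|} with hB2
  set B3 := {h : Fin p → ℝ | 1 ≤ |(∑ i, (h i) ^ 2) / (p : ℝ) - 1|} with hB3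
  have m1 : (Measure.pi fun _ : Fin (n p) => gaussianReal 0 1) B1
      ≤ ENNReal.ofReal (1 / (n p : ℝ) * V / κ ^ 2) := by
    have := aux_cheb (m := n p) _ aux_memLp_sq (fun _ => 1 / (n p : ℝ)) κ hκ
    rw [aux_mean_sq] at this
    convert this using 3
    · ext g
      rw [← Finset.mul_sum]
      simp only [Finset.sum_const, Finset.card_univ, Fintype.card_fin, nsmul_eq_mul]
      have e : 1 / (n p : ℝ) * ∑ j, (g j) ^ 2 - (n p : ℝ) * (1 / (n p : ℝ)) * 1
        = (∑ j, (g j) ^ 2) / (n p : ℝ) - 1 := by field_simp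
      rw [e]
    · simp only [Finset.sum_const, Finset.card_univ, Fintype.card_fin, nsmul_eq_mul]
      field_simp
      rfl
  have m2 : (Measure.pi fun _ : Fin (n p) => gaussianReal 0 1) B2
      ≤ ENNReal.ofReal ((∑ j, (w p j) ^ 2) / (n p : ℝ) * (1 / (n p : ℝ)) / κ ^ 2) := by
    have := aux_cheb (m := n p) (fun x => x) (memLp_id_gaussianReal' 2 (by norm_num))
      (fun j => w p j / (n p : ℝ)) κ hκ
    rw [integral_id_gaussianReal, variance_fun_id_gaussianReal] at this
    convert this using 3
    · ext g
      simp only [mul_zero, sub_zero]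
      rw [Finset.sum_div]
      have e : ∀ j, g j * w p j / (n p : ℝ) = w p j / (n p : ℝ) * g j := fun j => by ring
      simp only [e]
    · simp only [div_pow, NNReal.coe_one, mul_one]
      rw [← Finset.sum_div]
      field_simp
  have m3 : (Measure.pi fun _ : Fin p => gaussianReal 0 1) B3
      ≤ ENNReal.ofReal (1 / (p : ℝ) * V / 1 ^ 2) := by
    have := aux_cheb (m := p) _ aux_memLp_sq (fun _ => 1 / (p : ℝ)) 1 one_pos
    rw [aux_mean_sq] at this
    convert this using 3
    · ext g
      rw [← Finset.mul_sum]
      simp only [Finset.sum_const, Finset.card_univ, Fintype.card_fin, nsmul_eq_mul]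
      have e : 1 / (p : ℝ) * ∑ j, (g j) ^ 2 - (p : ℝ) * (1 / (p : ℝ)) * 1
        = (∑ j, (g j) ^ 2) / (p : ℝ) - 1 := by field_simp
      rw [e]
    · simp only [Finset.sum_const, Finset.card_univ, Fintype.card_fin, nsmul_eq_mul]
      field_simp
      rfl
  have hsub : Sᶜ ⊆ (B1 ×ˢ Set.univ ∪ B2 ×ˢ Set.univ) ∪ Set.univ ×ˢ B3 := by
    rintro ⟨g, h⟩ hgh
    by_contra hcon
    apply hgh
    simp only [Set.mem_union, Set.mem_prod, Set.mem_univ, and_true, true_and, not_or, hB1, hB2,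
      hB3, Set.mem_ofPred_eq, not_le] at hcon
    obtain ⟨⟨h1, h2⟩, h3⟩ := hcon
    have hH : (∑ i, (h i) ^ 2) / (n p : ℝ) ≤ M := by
      have a1 : (∑ i, (h i) ^ 2) / (p : ℝ) < 2 := by
        have := (abs_lt.1 h3).2
        linarith
      rw [div_lt_iff₀ hp0'] at a1
      rw [lt_div_iff₀ hp0'] at hδp
      rw [div_le_iff₀ hnp, hM]
      have : (2 : ℝ) * p ≤ 4 / δ * n p := by
        rw [div_mul_eq_mul_div, le_div_iff₀ hδ]
        linarith
      linarith
    have hne : Nonempty {v : Fin p → ℝ // ∑ i, (v i) ^ 2 ≤ K ^ 2 * (n p : ℝ)} :=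
      ⟨⟨0, by simp; positivity⟩⟩
    have hle : (⨆ v : {v : Fin p → ℝ // ∑ i, (v i) ^ 2 ≤ K ^ 2 * (n p : ℝ)},
            |Lfun (w p) (β p) (lam p) g h v.1
              - Ltil (n := n p) σw (β p) (lam p) h v.1|)
        ≤ η * (2 * (K + σw) + η + 2 * (K * Real.sqrt M)) / 2 :=
      ciSup_le fun v => aux_det hn0 σw K M κ η hσw hK hη.le hκη _ _ _ g h v.1 v.2
        h1.le hW.le h2.le hH
    have : η * (2 * (K + σw) + η + 2 * (K * Real.sqrt M)) ≤ η * D := by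
      rw [hD]; gcongr
    simp only [hS, Set.mem_ofPred_eq]
    linarith
  have hbad : μ Sᶜ ≤ b p := by
    refine (measure_mono hsub).trans ((measure_union_le _ _).trans ?_)
    refine add_le_add ((measure_union_le _ _).trans (add_le_add ?_ ?_)) ?_
    · rw [hμ, Measure.prod_prod, measure_univ, mul_one]; exact m1
    · rw [hμ, Measure.prod_prod, measure_univ, mul_one]; exact m2
    · rw [hμ, Measure.prod_prod, measure_univ, one_mul]; exact m3
  rw [tsub_le_iff_right]
  calc (1 : ENNReal) = μ Set.univ := by rw [measure_univ]
    _ ≤ μ S + μ Sᶜ := measure_univ_le_add_compl S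
    _ ≤ μ S + b p := by gcongr
end

section
/- Fix p ≥ 1, β ∈ ℝᵖ, and λ ∈ ℝᵖ with nonnegative nondecreasing entries, and let h ∼ N(0, I_p) be a standard Gaussian vector. Define F_p(c,τ) = (1/p)·E[ e_{J_λ}(c·h + β; τ) − J_λ(β) ] for (c,τ) ∈ ℝ × (0,∞). Then F_p is jointly convex in (c,τ) and continuously differentiable on ℝ × (0,∞), with partial derivatives ∂F_p/∂c (c,τ) = (1/(pτ))·E[ ⟨ c·h + β − Prox_{τλ}(c·h + β), h ⟩ ] and ∂F_p/∂τ (c,τ) = −(1/(2pτ²))·E[ ‖ c·h + β − Prox_{τλ}(c·h + β) ‖² ], where Prox_{τλ} denotes the SLOPE proximal operator with weight vector (τλ_1,…,τλ_p). -/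
open MeasureTheory Filter Finset Topology ProbabilityTheory

/-- The Moreau envelope `e_{J_λ}(x; τ) = min_v (1/(2τ))‖x − v‖² + J_λ(v)`. -/
noncomputable def moreauJ {p : ℕ} (lam x : Fin p → ℝ) (τ : ℝ) : ℝ :=
  ⨅ v : Fin p → ℝ, ((1 / (2 * τ)) * ∑ i, (x i - v i) ^ 2 + sortedL1 lam v)

/-- The standard Gaussian measure `N(0, I_p)` on `ℝᵖ`. -/
noncomputable def gaussPi (p : ℕ) : Measure (Fin p → ℝ) :=
  Measure.pi fun _ => gaussianReal 0 1

/-- `F_p(c,τ) = (1/p)·E[ e_{J_λ}(c·h + β; τ) − J_λ(β) ]`, `h ∼ N(0, I_p)`. -/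
noncomputable def Fp {p : ℕ} (lam β : Fin p → ℝ) (c τ : ℝ) : ℝ :=
  (∫ h, (moreauJ lam (fun i => c * h i + β i) τ - sortedL1 lam β) ∂gaussPi p) / p

/-- The claimed partial derivative `∂F_p/∂c (c,τ)
  = (1/(pτ))·E[⟨ c·h + β − Prox_{τλ}(c·h + β), h ⟩]`. -/
noncomputable def FpDc {p : ℕ} (lam β : Fin p → ℝ) (c τ : ℝ) : ℝ :=
  (∫ h, ∑ i, (c * h i + β i
      - slopeProx (fun j => τ * lam j) (fun j => c * h j + β j) i) * h i
    ∂gaussPi p) / (p * τ)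

/-- The claimed partial derivative `∂F_p/∂τ (c,τ)
  = −(1/(2pτ²))·E[‖ c·h + β − Prox_{τλ}(c·h + β) ‖²]`. -/
noncomputable def FpDτ {p : ℕ} (lam β : Fin p → ℝ) (c τ : ℝ) : ℝ :=
  -(∫ h, ∑ i, (c * h i + β i
      - slopeProx (fun j => τ * lam j) (fun j => c * h j + β j) i) ^ 2
    ∂gaussPi p) / (2 * p * τ ^ 2)

/-! ### Helper lemmas -/

/-- Euclidean norm. -/
noncomputable def nrm {p : ℕ} (x : Fin p → ℝ) : ℝ := √(∑ i, x i ^ 2)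

lemma nrm_nonneg {p : ℕ} (x : Fin p → ℝ) : 0 ≤ nrm x := Real.sqrt_nonneg _

lemma nrm_sq {p : ℕ} (x : Fin p → ℝ) : nrm x ^ 2 = ∑ i, x i ^ 2 :=
  Real.sq_sqrt (Finset.sum_nonneg fun _ _ => sq_nonneg _)

lemma inner_le {p : ℕ} (x y : Fin p → ℝ) : ∑ i, x i * y i ≤ nrm x * nrm y :=
  Real.sum_mul_le_sqrt_mul_sqrt _ _ _

lemma abs_le_nrm {p : ℕ} (x : Fin p → ℝ) (i : Fin p) : |x i| ≤ nrm x := by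
  apply Real.abs_le_sqrt
  exact Finset.single_le_sum (f := fun i => x i ^ 2) (fun _ _ => sq_nonneg _) (Finset.mem_univ i)

lemma nrm_le_sum {p : ℕ} (x : Fin p → ℝ) : nrm x ≤ ∑ i, |x i| := by
  apply Real.sqrt_le_iff.2
  refine ⟨Finset.sum_nonneg fun _ _ => abs_nonneg _, ?_⟩
  have h := Finset.sum_sq_le_sq_sum_of_nonneg (s := Finset.univ) (f := fun i => |x i|)
    (fun _ _ => abs_nonneg _)
  simpa using h

lemma nrm_continuous {p : ℕ} : Continuous (nrm : (Fin p → ℝ) → ℝ) := by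
  unfold nrm; fun_prop

section det
variable {p : ℕ} {lam : Fin p → ℝ}

lemma J_ge (hm : Monotone lam) (v : Fin p → ℝ) (σ : Equiv.Perm (Fin p)) :
    ∑ i, lam i * |v (σ i)| ≤ sortedL1 lam v := by
  have hs : Monotone (sortedAbs v) := Tuple.monotone_sort (fun j => |v j|)
  have h := (hm.monovary hs).sum_mul_comp_perm_le_sum_mul
    (σ := σ.trans (Tuple.sort (fun j => |v j|)).symm)
  simpa [sortedAbs, sortedL1] using h

lemma J_nonneg (hl : ∀ i, 0 ≤ lam i) (v : Fin p → ℝ) : 0 ≤ sortedL1 lam v :=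
  Finset.sum_nonneg fun i _ => mul_nonneg (hl i) (abs_nonneg _)

lemma J_le (v : Fin p → ℝ) : sortedL1 lam v ≤ nrm lam * nrm v := by
  have h := inner_le lam (sortedAbs v)
  have h2 : nrm (sortedAbs v) = nrm v := by
    unfold nrm sortedAbs
    simp only [sq_abs]
    rw [Equiv.sum_comp (Tuple.sort (fun j => |v j|)) (fun i => v i ^ 2)]
  rw [h2] at h
  exact h

lemma J_comb (hl : ∀ i, 0 ≤ lam i) (hm : Monotone lam) (v w : Fin p → ℝ) {a b : ℝ}
    (ha : 0 ≤ a) (hb : 0 ≤ b) :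
    sortedL1 lam (fun i => a * v i + b * w i) ≤ a * sortedL1 lam v + b * sortedL1 lam w := by
  set u : Fin p → ℝ := fun i => a * v i + b * w i with hu
  set σ := Tuple.sort (fun j => |u j|)
  have h1 := J_ge hm v σ
  have h2 := J_ge hm w σ
  calc sortedL1 lam u = ∑ i, lam i * |u (σ i)| := rfl
    _ ≤ ∑ i, (a * (lam i * |v (σ i)|) + b * (lam i * |w (σ i)|)) := by
        apply Finset.sum_le_sum
        intro i _
        have : |u (σ i)| ≤ a * |v (σ i)| + b * |w (σ i)| := by
          refine (abs_add_le _ _).trans ?_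
          rw [abs_mul, abs_mul, abs_of_nonneg ha, abs_of_nonneg hb]
        have := mul_le_mul_of_nonneg_left this (hl i)
        linarith
    _ = a * ∑ i, lam i * |v (σ i)| + b * ∑ i, lam i * |w (σ i)| := by
        rw [Finset.sum_add_distrib, Finset.mul_sum, Finset.mul_sum]
    _ ≤ _ := by gcongr

lemma J_lip (hl : ∀ i, 0 ≤ lam i) (hm : Monotone lam) (v w : Fin p → ℝ) :
    sortedL1 lam v - sortedL1 lam w ≤ nrm lam * nrm (fun i => v i - w i) := by
  have h := J_comb hl hm w (fun i => v i - w i) zero_le_one zero_le_one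
  simp only [one_mul, add_sub_cancel] at h
  have h2 := J_le (lam := lam) (fun i => v i - w i)
  have : sortedL1 lam (fun i => v i) = sortedL1 lam v := rfl
  linarith

lemma nrm_sub_comm (v w : Fin p → ℝ) : nrm (fun i => v i - w i) = nrm (fun i => w i - v i) := by
  unfold nrm
  congr 1
  exact Finset.sum_congr rfl fun i _ => by ring

lemma J_cont (hl : ∀ i, 0 ≤ lam i) (hm : Monotone lam) : Continuous (sortedL1 lam) := by
  rw [continuous_iff_continuousAt]
  intro w
  rw [ContinuousAt, tendsto_iff_norm_sub_tendsto_zero]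
  have hc : Continuous (fun v : Fin p → ℝ => nrm lam * nrm (fun i => v i - w i)) :=
    continuous_const.mul (nrm_continuous.comp (by fun_prop))
  have h0 := hc.tendsto w
  have hz : nrm lam * nrm (fun i => w i - w i) = 0 := by simp [nrm]
  simp only [hz] at h0
  refine squeeze_zero (fun _ => norm_nonneg _) (fun v => ?_) h0
  rw [Real.norm_eq_abs, abs_le]
  have h1 := J_lip hl hm v w
  have h2 := J_lip hl hm w v
  rw [nrm_sub_comm w v] at h2
  constructor <;> linarith

lemma J_smul (t : ℝ) (v : Fin p → ℝ) :
    sortedL1 (fun j => t * lam j) v = t * sortedL1 lam v := by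
  simp only [sortedL1, Finset.mul_sum, mul_assoc]

lemma prox_exists (hl : ∀ i, 0 ≤ lam i) (hm : Monotone lam) (y : Fin p → ℝ) :
    ∃ x : Fin p → ℝ, ∀ z : Fin p → ℝ, slopeObj lam y x ≤ slopeObj lam y z := by
  have hc : Continuous (slopeObj lam y) := by
    have := J_cont hl hm
    unfold slopeObj; fun_prop
  refine hc.exists_forall_le' y ?_
  set K : Set (Fin p → ℝ) := Metric.closedBall y (√(2 * slopeObj lam y y)) with hK
  have hKc : IsCompact K := isCompact_closedBall _ _
  filter_upwards [hKc.compl_mem_cocompact] with z hz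
  by_contra hlt
  push Not at hlt
  apply hz
  rw [hK, Metric.mem_closedBall, dist_pi_le_iff (Real.sqrt_nonneg _)]
  intro i
  rw [Real.dist_eq]
  apply Real.abs_le_sqrt
  have h1 : (y i - z i) ^ 2 ≤ ∑ i, (y i - z i) ^ 2 :=
    Finset.single_le_sum (f := fun i => (y i - z i) ^ 2) (fun _ _ => sq_nonneg _)
      (Finset.mem_univ i)
  have h2 := J_nonneg hl z
  have h3 : slopeObj lam y z = (1 / 2) * ∑ i, (y i - z i) ^ 2 + sortedL1 lam z := rfl
  nlinarith

/-- The proximal point with parameter `t`. -/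
noncomputable def PP (lam : Fin p → ℝ) (t : ℝ) (y : Fin p → ℝ) : Fin p → ℝ :=
  slopeProx (fun j => t * lam j) y

lemma PP_min (hl : ∀ i, 0 ≤ lam i) (hm : Monotone lam) {t : ℝ} (ht : 0 ≤ t)
    (y z : Fin p → ℝ) :
    (1 / 2) * ∑ i, (y i - PP lam t y i) ^ 2 + t * sortedL1 lam (PP lam t y) ≤
      (1 / 2) * ∑ i, (y i - z i) ^ 2 + t * sortedL1 lam z := by
  have hex := prox_exists (lam := fun j => t * lam j) (fun i => mul_nonneg ht (hl i))
    (fun i j hij => mul_le_mul_of_nonneg_left (hm hij) ht) y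
  have h : slopeObj (fun j => t * lam j) y (PP lam t y) ≤ slopeObj (fun j => t * lam j) y z := by
    unfold PP slopeProx
    rw [dif_pos hex]
    exact hex.choose_spec z
  unfold slopeObj at h
  rwa [J_smul, J_smul] at h

lemma le_of_small {a b c : ℝ} (h : ∀ t : ℝ, 0 < t → t ≤ 1 → a ≤ t * b + c) : a ≤ c := by
  have h1 : Tendsto (fun t : ℝ => t * b + c) (𝓝[>] 0) (𝓝 (0 * b + c)) := by
    apply Tendsto.mono_left _ nhdsWithin_le_nhds
    exact (by fun_prop : Continuous fun t : ℝ => t * b + c).tendsto 0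
  rw [zero_mul, zero_add] at h1
  refine ge_of_tendsto h1 ?_
  filter_upwards [Ioc_mem_nhdsGT (zero_lt_one' ℝ)] with t ht
  exact h t ht.1 ht.2

lemma PP_vi (hl : ∀ i, 0 ≤ lam i) (hm : Monotone lam) {t : ℝ} (ht : 0 ≤ t)
    (y z : Fin p → ℝ) :
    ∑ i, (y i - PP lam t y i) * (z i - PP lam t y i) ≤
      t * (sortedL1 lam z - sortedL1 lam (PP lam t y)) := by
  set x := PP lam t y with hx
  apply le_of_small (b := (1 / 2) * ∑ i, (z i - x i) ^ 2)
  intro s hs hs1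
  have h := PP_min hl hm ht y (fun i => (1 - s) * x i + s * z i)
  have h2 := mul_le_mul_of_nonneg_left (J_comb hl hm x z (sub_nonneg.2 hs1) hs.le) ht
  have e : ∑ i, (y i - ((1 - s) * x i + s * z i)) ^ 2 = ∑ i, (y i - x i) ^ 2
      - 2 * s * ∑ i, (y i - x i) * (z i - x i) + s ^ 2 * ∑ i, (z i - x i) ^ 2 := by
    rw [Finset.mul_sum, Finset.mul_sum, ← Finset.sum_sub_distrib, ← Finset.sum_add_distrib]
    exact Finset.sum_congr rfl fun i _ => by ring
  rw [e, ← hx] at h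
  have h3 : s * ∑ i, (y i - x i) * (z i - x i) ≤ s * (s * ((1 / 2) * ∑ i, (z i - x i) ^ 2)
      + t * (sortedL1 lam z - sortedL1 lam x)) := by
    linarith
  exact le_of_mul_le_mul_left h3 hs

lemma PP_lip (hl : ∀ i, 0 ≤ lam i) (hm : Monotone lam) {t s : ℝ} (ht : 0 ≤ t) (hs : 0 ≤ s)
    (y z : Fin p → ℝ) :
    nrm (fun i => PP lam t y i - PP lam s z i) ≤ nrm (fun i => y i - z i) + nrm lam * |t - s| := by
  set x := PP lam t y with hx
  set w := PP lam s z with hw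
  have h1 := PP_vi hl hm ht y w
  have h2 := PP_vi hl hm hs z x
  rw [← hx] at h1
  rw [← hw] at h2
  set d := nrm (fun i => x i - w i) with hd
  have hd2 : d ^ 2 = ∑ i, (x i - w i) ^ 2 := nrm_sq _
  have e : ∑ i, (y i - x i) * (w i - x i) + ∑ i, (z i - w i) * (x i - w i) =
      ∑ i, (x i - w i) ^ 2 - ∑ i, (y i - z i) * (x i - w i) := by
    rw [← Finset.sum_add_distrib, ← Finset.sum_sub_distrib]
    exact Finset.sum_congr rfl fun i _ => by ring
  have h3 : ∑ i, (y i - z i) * (x i - w i) ≤ nrm (fun i => y i - z i) * d :=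
    inner_le (fun i => y i - z i) (fun i => x i - w i)
  have h4 : (t - s) * (sortedL1 lam w - sortedL1 lam x) ≤ |t - s| * (nrm lam * d) := by
    refine (le_abs_self _).trans ?_
    rw [abs_mul]
    refine mul_le_mul_of_nonneg_left ?_ (abs_nonneg _)
    rw [abs_le]
    have h5 := J_lip hl hm w x
    have h6 := J_lip hl hm x w
    rw [nrm_sub_comm w x] at h5
    constructor <;> linarith
  have h7 : d * d ≤ d * (nrm (fun i => y i - z i) + nrm lam * |t - s|) := by nlinarith
  rcases (nrm_nonneg (fun i => x i - w i)).eq_or_lt with h0 | h0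
  · rw [hd, ← h0]
    exact add_nonneg (nrm_nonneg _) (mul_nonneg (nrm_nonneg _) (abs_nonneg _))
  · exact le_of_mul_le_mul_left h7 h0

lemma res_le (hl : ∀ i, 0 ≤ lam i) (hm : Monotone lam) {t : ℝ} (ht : 0 ≤ t) (y : Fin p → ℝ) :
    nrm (fun i => y i - PP lam t y i) ≤ t * nrm lam := by
  have h := PP_vi hl hm ht y y
  have h2 := mul_le_mul_of_nonneg_left (J_lip hl hm y (PP lam t y)) ht
  set d := nrm (fun i => y i - PP lam t y i) with hd
  have hd2 : d ^ 2 = ∑ i, (y i - PP lam t y i) ^ 2 := nrm_sq _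
  simp only [← pow_two] at h
  have h7 : d * d ≤ d * (t * nrm lam) := by nlinarith
  rcases (nrm_nonneg (fun i => y i - PP lam t y i)).eq_or_lt with h0 | h0
  · rw [hd, ← h0]
    exact mul_nonneg ht (nrm_nonneg _)
  · exact le_of_mul_le_mul_left h7 h0

lemma PP_cont (hl : ∀ i, 0 ≤ lam i) (hm : Monotone lam) :
    ContinuousOn (fun q : ℝ × (Fin p → ℝ) => PP lam q.1 q.2) {q | 0 ≤ q.1} := by
  intro q hq
  unfold ContinuousWithinAt
  rw [tendsto_pi_nhds]
  intro i
  rw [tendsto_iff_norm_sub_tendsto_zero]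
  have hc : Continuous (fun r : ℝ × (Fin p → ℝ) =>
      nrm (fun i => r.2 i - q.2 i) + nrm lam * |r.1 - q.1|) :=
    (nrm_continuous.comp (by fun_prop)).add (by fun_prop)
  have h0 := (hc.tendsto q).mono_left (nhdsWithin_le_nhds (s := {q | 0 ≤ q.1}))
  have hz : nrm (fun i => q.2 i - q.2 i) + nrm lam * |q.1 - q.1| = 0 := by simp [nrm]
  simp only [hz] at h0
  refine squeeze_zero' (Eventually.of_forall fun _ => norm_nonneg _) ?_ h0
  filter_upwards [self_mem_nhdsWithin] with r hr
  rw [Real.norm_eq_abs]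
  exact (abs_le_nrm (fun i => PP lam r.1 r.2 i - PP lam q.1 q.2 i) i).trans
    (PP_lip hl hm hr hq _ _)

lemma PP_cont' (hl : ∀ i, 0 ≤ lam i) (hm : Monotone lam) {t : ℝ} (ht : 0 ≤ t) :
    Continuous (PP lam t) :=
  (PP_cont hl hm).comp_continuous (f := fun y => (t, y)) (by fun_prop) (fun _ => ht)

lemma moreau_le (hl : ∀ i, 0 ≤ lam i) {t : ℝ} (ht : 0 < t) (y v : Fin p → ℝ) :
    moreauJ lam y t ≤ (1 / (2 * t)) * ∑ i, (y i - v i) ^ 2 + sortedL1 lam v := by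
  refine ciInf_le ⟨0, ?_⟩ v
  rintro _ ⟨w, rfl⟩
  have := J_nonneg hl w
  positivity

lemma moreau_eq (hl : ∀ i, 0 ≤ lam i) (hm : Monotone lam) {t : ℝ} (ht : 0 < t)
    (y : Fin p → ℝ) :
    moreauJ lam y t = (1 / (2 * t)) * ∑ i, (y i - PP lam t y i) ^ 2
      + sortedL1 lam (PP lam t y) := by
  refine le_antisymm (moreau_le hl ht y _) ?_
  refine le_ciInf fun v => ?_
  have h := div_le_div_of_nonneg_right (PP_min hl hm ht.le y v) ht.le
  have e : ∀ a b : ℝ, (1 / 2 * a + t * b) / t = 1 / (2 * t) * a + b := by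
    intro a b; field_simp
  rwa [e, e] at h

lemma moreau_le_J (hl : ∀ i, 0 ≤ lam i) {t : ℝ} (ht : 0 < t) (y : Fin p → ℝ) :
    moreauJ lam y t ≤ sortedL1 lam y := by
  simpa using moreau_le hl ht y y

lemma persp (a b s t u v : ℝ) (ha : 0 ≤ a) (hb : 0 ≤ b) (hs : 0 < s) (ht : 0 < t)
    (hab : a + b = 1) :
    (1 / (2 * (a * s + b * t))) * (a * u + b * v) ^ 2 ≤
      a * ((1 / (2 * s)) * u ^ 2) + b * ((1 / (2 * t)) * v ^ 2) := by
  have hp : 0 < a * s + b * t := by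
    rcases ha.eq_or_lt with h | h
    · have : b = 1 := by linarith
      rw [← h, this]; linarith
    · have := mul_pos h hs
      have := mul_nonneg hb ht.le
      linarith
  have key : a * ((1 / (2 * s)) * u ^ 2) + b * ((1 / (2 * t)) * v ^ 2)
      - (1 / (2 * (a * s + b * t))) * (a * u + b * v) ^ 2
      = a * b * (u * t - v * s) ^ 2 / (2 * s * t * (a * s + b * t)) := by
    field_simp
    ring
  have : 0 ≤ a * b * (u * t - v * s) ^ 2 / (2 * s * t * (a * s + b * t)) := by positivity
  linarith

lemma moreau_convex (hl : ∀ i, 0 ≤ lam i) (hm : Monotone lam) (a b s t : ℝ)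
    (x y w : Fin p → ℝ) (ha : 0 ≤ a) (hb : 0 ≤ b) (hs : 0 < s) (ht : 0 < t) (hab : a + b = 1)
    (hw : ∀ i, w i = a * x i + b * y i) :
    moreauJ lam w (a * s + b * t) ≤ a * moreauJ lam x s + b * moreauJ lam y t := by
  have hp : 0 < a * s + b * t := by
    rcases ha.eq_or_lt with h | h
    · have : b = 1 := by linarith
      rw [← h, this]; linarith
    · have := mul_pos h hs
      have := mul_nonneg hb ht.le
      linarith
  rw [moreau_eq hl hm hs x, moreau_eq hl hm ht y]
  set X := PP lam s x
  set Y := PP lam t y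
  refine (moreau_le hl hp w (fun i => a * X i + b * Y i)).trans ?_
  have h1 := J_comb hl hm X Y ha hb
  have h2 : (1 / (2 * (a * s + b * t))) * ∑ i, (w i - (a * X i + b * Y i)) ^ 2 ≤
      a * ((1 / (2 * s)) * ∑ i, (x i - X i) ^ 2) + b * ((1 / (2 * t)) * ∑ i, (y i - Y i) ^ 2) := by
    simp only [Finset.mul_sum]
    rw [← Finset.sum_add_distrib]
    refine Finset.sum_le_sum fun i _ => ?_
    have := persp a b s t (x i - X i) (y i - Y i) ha hb hs ht hab
    have e : w i - (a * X i + b * Y i) = a * (x i - X i) + b * (y i - Y i) := by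
      rw [hw]; ring
    rw [e]
    exact this
  linarith

end det

lemma hasDerivAt_of_touch {f g : ℝ → ℝ} {x g' : ℝ} (hg : HasDerivAt g g' x)
    (hle : ∀ᶠ y in 𝓝 x, f y ≤ g y) (hx : f x = g x)
    (hmid : ∀ᶠ y in 𝓝 x, 2 * f x ≤ f y + f (2 * x - y)) : HasDerivAt f g' x := by
  rw [hasDerivAt_iff_isLittleO] at hg ⊢
  have ht : Tendsto (fun y : ℝ => 2 * x - y) (𝓝 x) (𝓝 x) := by
    have := (by fun_prop : Continuous fun y : ℝ => 2 * x - y).tendsto x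
    convert this using 2
    ring
  have h2 := hg.comp_tendsto ht
  have h3 : (fun y => g (2 * x - y) - g x - (2 * x - y - x) • g') =o[𝓝 x] fun y => y - x := by
    refine Asymptotics.IsLittleO.trans_isBigO (g := fun y => 2 * x - y - x) h2 ?_
    refine Asymptotics.IsBigO.of_bound 1 (Eventually.of_forall fun y => ?_)
    simp only [Real.norm_eq_abs, one_mul]
    rw [show 2 * x - y - x = -(y - x) by ring, abs_neg]
  have h := hg.norm_left.add h3.norm_left
  refine Asymptotics.IsBigO.trans_isLittleO ?_ h
  · refine Asymptotics.IsBigO.of_bound 1 ?_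
    filter_upwards [hle, hmid, ht.eventually hle] with y h1 h4 h5
    rw [one_mul, Real.norm_eq_abs, Real.norm_eq_abs, Real.norm_eq_abs, Real.norm_eq_abs]
    refine le_trans ?_ (le_abs_self _)
    simp only [smul_eq_mul]
    rw [abs_le]
    have a1 := neg_abs_le (g y - g x - (y - x) * g')
    have a2 := le_abs_self (g y - g x - (y - x) * g')
    have a3 := le_abs_self (g (2 * x - y) - g x - (2 * x - y - x) * g')
    have a4 := abs_nonneg (g (2 * x - y) - g x - (2 * x - y - x) * g')
    have a5 := abs_nonneg (g y - g x - (y - x) * g')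
    constructor <;> nlinarith


section prob
variable {p : ℕ} {lam : Fin p → ℝ}

instance : IsProbabilityMeasure (gaussPi p) := by unfold gaussPi; infer_instance

lemma memLp_coord (i : Fin p) : MemLp (fun h : Fin p → ℝ => h i) 2 (gaussPi p) := by
  have h1 : MeasurePreserving (Function.eval i) (gaussPi p) (gaussianReal 0 1) :=
    measurePreserving_eval (fun _ : Fin p => gaussianReal 0 1) i
  have h2 : MemLp id 2 (gaussianReal 0 1) := memLp_id_gaussianReal 2
  exact h2.comp_measurePreserving h1

lemma int_coord (i : Fin p) : Integrable (fun h : Fin p → ℝ => h i) (gaussPi p) :=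
  (memLp_coord i).integrable (by norm_num)

lemma int_sq (i : Fin p) : Integrable (fun h : Fin p → ℝ => h i ^ 2) (gaussPi p) :=
  (memLp_coord i).integrable_sq

/-- The residual `y - Prox y` at `y = c h + β`. -/
noncomputable def RR (lam β : Fin p → ℝ) (c t : ℝ) (h : Fin p → ℝ) (i : Fin p) : ℝ :=
  c * h i + β i - PP lam t (fun j => c * h j + β j) i

lemma RR_cont (hl : ∀ i, 0 ≤ lam i) (hm : Monotone lam) (β : Fin p → ℝ) (c : ℝ) {t : ℝ}
    (ht : 0 ≤ t) (i : Fin p) : Continuous (fun h => RR lam β c t h i) := by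
  have h1 : Continuous (fun h : Fin p → ℝ => PP lam t (fun j => c * h j + β j)) :=
    (PP_cont' hl hm ht).comp (by fun_prop)
  have h2 := (continuous_apply i).comp h1
  unfold RR
  exact Continuous.sub (by fun_prop) h2

lemma RR_bd (hl : ∀ i, 0 ≤ lam i) (hm : Monotone lam) (β : Fin p → ℝ) (c : ℝ) {t : ℝ}
    (ht : 0 ≤ t) (h : Fin p → ℝ) (i : Fin p) : |RR lam β c t h i| ≤ t * nrm lam :=
  (abs_le_nrm (fun i => RR lam β c t h i) i).trans (res_le hl hm ht _)

lemma RR_joint (hl : ∀ i, 0 ≤ lam i) (hm : Monotone lam) (β h : Fin p → ℝ) (i : Fin p) :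
    ContinuousOn (fun q : ℝ × ℝ => RR lam β q.1 q.2 h i) {q | 0 < q.2} := by
  have h1 : ContinuousOn (fun q : ℝ × ℝ => PP lam q.2 (fun j => q.1 * h j + β j))
      {q | 0 < q.2} :=
    (PP_cont hl hm).comp (f := fun q : ℝ × ℝ => (q.2, fun j => q.1 * h j + β j))
      (Continuous.continuousOn (by fun_prop)) (fun q (hq : 0 < q.2) => hq.le)
  have h2 := (continuous_apply i).comp_continuousOn h1
  unfold RR
  exact ContinuousOn.sub (by fun_prop) h2

lemma int_RR_sq (hl : ∀ i, 0 ≤ lam i) (hm : Monotone lam) (β : Fin p → ℝ) (c : ℝ) {t : ℝ}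
    (ht : 0 ≤ t) : Integrable (fun h => ∑ i, RR lam β c t h i ^ 2) (gaussPi p) := by
  refine integrable_finsetSum _ fun i _ => ?_
  refine (integrable_const ((t * nrm lam) ^ 2)).mono'
    ((RR_cont hl hm β c ht i).pow 2).aestronglyMeasurable (Eventually.of_forall fun h => ?_)
  rw [Real.norm_eq_abs, abs_pow]
  exact pow_le_pow_left₀ (abs_nonneg _) (RR_bd hl hm β c ht h i) 2

lemma int_RR_mul (hl : ∀ i, 0 ≤ lam i) (hm : Monotone lam) (β : Fin p → ℝ) (c : ℝ) {t : ℝ}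
    (ht : 0 ≤ t) : Integrable (fun h => ∑ i, RR lam β c t h i * h i) (gaussPi p) := by
  refine integrable_finsetSum _ fun i _ => ?_
  refine ((int_coord i).abs.const_mul (t * nrm lam)).mono'
    ((RR_cont hl hm β c ht i).mul (continuous_apply i)).aestronglyMeasurable
    (Eventually.of_forall fun h => ?_)
  rw [Real.norm_eq_abs, abs_mul]
  exact mul_le_mul_of_nonneg_right (RR_bd hl hm β c ht h i) (abs_nonneg _)

lemma J_aff_le (β : Fin p → ℝ) (c : ℝ) (h : Fin p → ℝ) :
    sortedL1 lam (fun i => c * h i + β i) ≤ nrm lam * ∑ i, (|c| * |h i| + |β i|) := by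
  refine (J_le _).trans (mul_le_mul_of_nonneg_left ((nrm_le_sum _).trans ?_) (nrm_nonneg _))
  refine Finset.sum_le_sum fun i _ => ?_
  rw [← abs_mul]
  exact abs_add_le _ _

lemma int_bd (β : Fin p → ℝ) (c : ℝ) :
    Integrable (fun h : Fin p → ℝ => nrm lam * ∑ i, (|c| * |h i| + |β i|)) (gaussPi p) := by
  refine Integrable.const_mul (integrable_finsetSum _ fun i _ => ?_) _
  exact ((int_coord i).abs.const_mul _).add (integrable_const _)

lemma moreau_RR (hl : ∀ i, 0 ≤ lam i) (hm : Monotone lam) (β : Fin p → ℝ) (c : ℝ) {t : ℝ}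
    (ht : 0 < t) (h : Fin p → ℝ) :
    moreauJ lam (fun i => c * h i + β i) t = (1 / (2 * t)) * ∑ i, RR lam β c t h i ^ 2
      + sortedL1 lam (PP lam t (fun i => c * h i + β i)) := moreau_eq hl hm ht _

lemma int_JP (hl : ∀ i, 0 ≤ lam i) (hm : Monotone lam) (β : Fin p → ℝ) (c : ℝ) {t : ℝ}
    (ht : 0 < t) :
    Integrable (fun h => sortedL1 lam (PP lam t (fun i => c * h i + β i))) (gaussPi p) := by
  refine (int_bd (lam := lam) β c).mono' ?_ (Eventually.of_forall fun h => ?_)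
  · exact ((J_cont hl hm).comp ((PP_cont' hl hm ht.le).comp
      (by fun_prop : Continuous fun h : Fin p → ℝ => fun i => c * h i + β i))).aestronglyMeasurable
  · rw [Real.norm_of_nonneg (J_nonneg hl _)]
    refine le_trans ?_ (J_aff_le β c h)
    have h1 := moreau_le_J hl ht (fun i => c * h i + β i)
    rw [moreau_RR hl hm β c ht h] at h1
    have : 0 ≤ (1 / (2 * t)) * ∑ i, RR lam β c t h i ^ 2 := by positivity
    linarith

lemma int_moreau (hl : ∀ i, 0 ≤ lam i) (hm : Monotone lam) (β : Fin p → ℝ) (c : ℝ) {t : ℝ}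
    (ht : 0 < t) :
    Integrable (fun h => moreauJ lam (fun i => c * h i + β i) t - sortedL1 lam β)
      (gaussPi p) := by
  simp only [moreau_RR hl hm β c ht]
  exact (((int_RR_sq hl hm β c ht.le).const_mul _).add (int_JP hl hm β c ht)).sub
    (integrable_const _)

lemma Fp_convex (hl : ∀ i, 0 ≤ lam i) (hm : Monotone lam) (β : Fin p → ℝ) :
    ConvexOn ℝ {q : ℝ × ℝ | 0 < q.2} (fun q => Fp lam β q.1 q.2) := by
  refine ⟨convex_halfSpace_gt (LinearMap.snd ℝ ℝ ℝ).isLinear 0, ?_⟩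
  rintro ⟨c, s⟩ hs ⟨d, t⟩ ht a b ha hb hab
  have hst := convex_halfSpace_gt (LinearMap.snd ℝ ℝ ℝ).isLinear 0 hs ht ha hb hab
  simp only [Prod.smul_mk, Prod.mk_add_mk, smul_eq_mul, Set.mem_ofPred_eq, LinearMap.snd_apply]
    at hs ht hst ⊢
  unfold Fp
  rw [← mul_div_assoc, ← mul_div_assoc, ← add_div]
  refine div_le_div_of_nonneg_right ?_ (Nat.cast_nonneg p)
  rw [← integral_const_mul, ← integral_const_mul, ← integral_add
    ((int_moreau hl hm β c hs).const_mul a) ((int_moreau hl hm β d ht).const_mul b)]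
  refine integral_mono (int_moreau hl hm β _ hst)
    (((int_moreau hl hm β c hs).const_mul a).add ((int_moreau hl hm β d ht).const_mul b))
    fun h => ?_
  have h1 := moreau_convex hl hm a b s t (fun i => c * h i + β i) (fun i => d * h i + β i)
    (fun i => (a * c + b * d) * h i + β i) ha hb hs ht hab (fun i => by
      have : β i = (a + b) * β i := by rw [hab, one_mul]
      linear_combination this)
  have : sortedL1 lam β = (a + b) * sortedL1 lam β := by rw [hab, one_mul]
  simp only
  linarith

/-- The smooth majorant of `Fp` touching at `(c, t)`. -/
noncomputable def Phi (lam β : Fin p → ℝ) (c t d s : ℝ) : ℝ :=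
  ((1 / (2 * s)) * (∫ h, ∑ i, RR lam β c t h i ^ 2 ∂gaussPi p
    + 2 * (d - c) * ∫ h, ∑ i, RR lam β c t h i * h i ∂gaussPi p
    + (d - c) ^ 2 * ∫ h, ∑ i, h i ^ 2 ∂gaussPi p)
    + ∫ h, (sortedL1 lam (PP lam t (fun i => c * h i + β i)) - sortedL1 lam β) ∂gaussPi p) / p

lemma Fp_eq_Phi (hl : ∀ i, 0 ≤ lam i) (hm : Monotone lam) (β : Fin p → ℝ) (c : ℝ) {t : ℝ}
    (ht : 0 < t) : Fp lam β c t = Phi lam β c t c t := by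
  unfold Fp Phi
  congr 1
  simp only [moreau_RR hl hm β c ht, add_sub_assoc]
  have i4 : Integrable (fun h => sortedL1 lam (PP lam t (fun i => c * h i + β i))
      - sortedL1 lam β) (gaussPi p) := (int_JP hl hm β c ht).sub (integrable_const _)
  rw [integral_add ((int_RR_sq hl hm β c ht.le).const_mul _) i4, integral_const_mul]
  ring

lemma Fp_le_Phi (hl : ∀ i, 0 ≤ lam i) (hm : Monotone lam) (β : Fin p → ℝ) (c d : ℝ) {t s : ℝ}
    (ht : 0 < t) (hs : 0 < s) : Fp lam β d s ≤ Phi lam β c t d s := by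
  unfold Fp Phi
  refine div_le_div_of_nonneg_right ?_ (Nat.cast_nonneg p)
  have i1 := int_RR_sq hl hm β c ht.le
  have i2 := (int_RR_mul hl hm β c ht.le).const_mul (2 * (d - c))
  have i3 : Integrable (fun h : Fin p → ℝ => (d - c) ^ 2 * ∑ i, h i ^ 2) (gaussPi p) :=
    (integrable_finsetSum _ fun i _ => int_sq i).const_mul _
  have i4 : Integrable (fun h => sortedL1 lam (PP lam t (fun i => c * h i + β i))
      - sortedL1 lam β) (gaussPi p) := (int_JP hl hm β c ht).sub (integrable_const _)
  have i12 : Integrable (fun h => ∑ i, RR lam β c t h i ^ 2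
      + 2 * (d - c) * ∑ i, RR lam β c t h i * h i) (gaussPi p) := i1.add i2
  have i123 : Integrable (fun h => 1 / (2 * s) * (∑ i, RR lam β c t h i ^ 2
      + 2 * (d - c) * ∑ i, RR lam β c t h i * h i + (d - c) ^ 2 * ∑ i, h i ^ 2)) (gaussPi p) :=
    (i12.add i3).const_mul _
  rw [← integral_const_mul, ← integral_const_mul, ← integral_add i1 i2,
    ← integral_add i12 i3, ← integral_const_mul,
    ← integral_add i123 i4]
  refine integral_mono (int_moreau hl hm β d hs) (i123.add i4)
    fun h => ?_
  have h1 := moreau_le hl hs (fun i => d * h i + β i) (PP lam t (fun i => c * h i + β i))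
  have e : ∑ i, (d * h i + β i - PP lam t (fun i => c * h i + β i) i) ^ 2 =
      ∑ i, RR lam β c t h i ^ 2 + 2 * (d - c) * ∑ i, RR lam β c t h i * h i
        + (d - c) ^ 2 * ∑ i, h i ^ 2 := by
    rw [Finset.mul_sum, Finset.mul_sum, ← Finset.sum_add_distrib, ← Finset.sum_add_distrib]
    refine Finset.sum_congr rfl fun i _ => ?_
    unfold RR
    ring
  rw [e] at h1
  simp only
  linarith

lemma Fp_mid (hl : ∀ i, 0 ≤ lam i) (hm : Monotone lam) (β : Fin p → ℝ) (c t d s d' s' : ℝ)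
    (hs : 0 < s) (hs' : 0 < s') (hd : d + d' = 2 * c) (h : s + s' = 2 * t) :
    2 * Fp lam β c t ≤ Fp lam β d s + Fp lam β d' s' := by
  have := (Fp_convex hl hm β).2 (show (d, s) ∈ {q : ℝ × ℝ | 0 < q.2} from hs)
    (show (d', s') ∈ {q : ℝ × ℝ | 0 < q.2} from hs') (show (0 : ℝ) ≤ 1 / 2 by norm_num)
    (show (0 : ℝ) ≤ 1 / 2 by norm_num) (by norm_num)
  simp only [Prod.smul_mk, Prod.mk_add_mk, smul_eq_mul] at this
  rw [show 1 / 2 * d + 1 / 2 * d' = c by linarith, show 1 / 2 * s + 1 / 2 * s' = t by linarith]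
    at this
  linarith

lemma Fp_dc (hl : ∀ i, 0 ≤ lam i) (hm : Monotone lam) (β : Fin p → ℝ) (c : ℝ) {t : ℝ}
    (hp : 1 ≤ p) (ht : 0 < t) :
    HasDerivAt (fun c' => Fp lam β c' t) (FpDc lam β c t) c := by
  refine hasDerivAt_of_touch (g := fun d => Phi lam β c t d t) ?_
    (Eventually.of_forall fun d => Fp_le_Phi hl hm β c d ht ht) (Fp_eq_Phi hl hm β c ht)
    (Eventually.of_forall fun d => Fp_mid hl hm β c t d t _ t ht ht (by ring) (by ring))
  have hp' : (p : ℝ) ≠ 0 := by positivity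
  have e : FpDc lam β c t = (∫ h, ∑ i, RR lam β c t h i * h i ∂gaussPi p) / (p * t) := rfl
  rw [e]
  unfold Phi
  generalize (∫ h, ∑ i, RR lam β c t h i * h i ∂gaussPi p) = B
  generalize (∫ h, ∑ i, RR lam β c t h i ^ 2 ∂gaussPi p) = A
  generalize (∫ h : Fin p → ℝ, ∑ i, h i ^ 2 ∂gaussPi p) = H
  have h1 : HasDerivAt (fun d : ℝ => d - c) 1 c := (hasDerivAt_id c).sub_const c
  have h2 := ((((((h1.const_mul 2).mul_const B).const_add A).add
    ((h1.pow 2).mul_const H)).const_mul (1 / (2 * t))).add_const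
    (∫ h, (sortedL1 lam (PP lam t (fun i => c * h i + β i)) - sortedL1 lam β)
      ∂gaussPi p)).div_const (p : ℝ)
  refine h2.congr_deriv ?_
  simp
  field_simp

lemma Fp_dt (hl : ∀ i, 0 ≤ lam i) (hm : Monotone lam) (β : Fin p → ℝ) (c : ℝ) {t : ℝ}
    (hp : 1 ≤ p) (ht : 0 < t) :
    HasDerivAt (fun t' => Fp lam β c t') (FpDτ lam β c t) t := by
  have hpos : ∀ᶠ s in 𝓝 t, 0 < s := lt_mem_nhds ht
  have hlt : ∀ᶠ s in 𝓝 t, s < 2 * t := gt_mem_nhds (by linarith)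
  refine hasDerivAt_of_touch (g := fun s => Phi lam β c t c s) ?_
    (hpos.mono fun s hs => Fp_le_Phi hl hm β c c ht hs) (Fp_eq_Phi hl hm β c ht)
    ((hpos.and hlt).mono fun s hs => Fp_mid hl hm β c t c s c _ hs.1 (by linarith [hs.2])
      (by ring) (by ring))
  have hp' : (p : ℝ) ≠ 0 := by positivity
  have e : FpDτ lam β c t = -(∫ h, ∑ i, RR lam β c t h i ^ 2 ∂gaussPi p) / (2 * p * t ^ 2) := rfl
  rw [e]
  unfold Phi
  generalize (∫ h, ∑ i, RR lam β c t h i * h i ∂gaussPi p) = B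
  generalize (∫ h, ∑ i, RR lam β c t h i ^ 2 ∂gaussPi p) = A
  generalize (∫ h : Fin p → ℝ, ∑ i, h i ^ 2 ∂gaussPi p) = H
  have h1 : HasDerivAt (fun s : ℝ => 2 * s) (2 * 1) t := (hasDerivAt_id t).const_mul 2
  have h2 := ((((hasDerivAt_const t (1 : ℝ)).div h1 (by positivity)).mul_const
    (A + 2 * (c - c) * B + (c - c) ^ 2 * H)).add_const
    (∫ h, (sortedL1 lam (PP lam t (fun i => c * h i + β i)) - sortedL1 lam β)
      ∂gaussPi p)).div_const (p : ℝ)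
  refine h2.congr_deriv ?_
  simp
  field_simp

lemma Dc_cont (hl : ∀ i, 0 ≤ lam i) (hm : Monotone lam) (β : Fin p → ℝ) (hp : 1 ≤ p) :
    ContinuousOn (fun q : ℝ × ℝ => FpDc lam β q.1 q.2) {q : ℝ × ℝ | 0 < q.2} := by
  have hp' : (p : ℝ) ≠ 0 := by positivity
  have ho : IsOpen {q : ℝ × ℝ | 0 < q.2} := isOpen_lt continuous_const continuous_snd
  have h1 : ContinuousOn (fun q : ℝ × ℝ => ∫ h, ∑ i, RR lam β q.1 q.2 h i * h i ∂gaussPi p)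
      {q : ℝ × ℝ | 0 < q.2} := by
    intro q hq
    refine ContinuousAt.continuousWithinAt ?_
    have hn := ho.mem_nhds hq
    have hb : ∀ᶠ r : ℝ × ℝ in 𝓝 q, r.2 < q.2 + 1 :=
      (isOpen_lt continuous_snd continuous_const).mem_nhds (by simp)
    refine continuousAt_of_dominated
      (bound := fun h => ∑ i, (q.2 + 1) * nrm lam * |h i|) ?_ ?_ ?_ ?_
    · filter_upwards [hn] with r hr
      exact (int_RR_mul hl hm β r.1 (le_of_lt hr)).aestronglyMeasurable
    · filter_upwards [hn, hb] with r hr hr2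
      refine Eventually.of_forall fun h => ?_
      refine (norm_sum_le _ _).trans (Finset.sum_le_sum fun i _ => ?_)
      rw [Real.norm_eq_abs, abs_mul]
      refine mul_le_mul_of_nonneg_right ?_ (abs_nonneg _)
      refine (RR_bd hl hm β r.1 (le_of_lt hr) h i).trans ?_
      exact mul_le_mul_of_nonneg_right hr2.le (nrm_nonneg _)
    · exact integrable_finsetSum _ fun i _ => (int_coord i).abs.const_mul _
    · refine Eventually.of_forall fun h => ?_
      have : ContinuousOn (fun r : ℝ × ℝ => ∑ i, RR lam β r.1 r.2 h i * h i)
          {q : ℝ × ℝ | 0 < q.2} :=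
        continuousOn_finsetSum _ fun i _ => (RR_joint hl hm β h i).mul continuousOn_const
      exact this.continuousAt hn
  exact h1.div (by fun_prop) fun q hq => mul_ne_zero hp' (ne_of_gt hq)

lemma Dt_cont (hl : ∀ i, 0 ≤ lam i) (hm : Monotone lam) (β : Fin p → ℝ) (hp : 1 ≤ p) :
    ContinuousOn (fun q : ℝ × ℝ => FpDτ lam β q.1 q.2) {q : ℝ × ℝ | 0 < q.2} := by
  have hp' : (p : ℝ) ≠ 0 := by positivity
  have ho : IsOpen {q : ℝ × ℝ | 0 < q.2} := isOpen_lt continuous_const continuous_snd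
  have h1 : ContinuousOn (fun q : ℝ × ℝ => ∫ h, ∑ i, RR lam β q.1 q.2 h i ^ 2 ∂gaussPi p)
      {q : ℝ × ℝ | 0 < q.2} := by
    intro q hq
    refine ContinuousAt.continuousWithinAt ?_
    have hn := ho.mem_nhds hq
    have hb : ∀ᶠ r : ℝ × ℝ in 𝓝 q, r.2 < q.2 + 1 :=
      (isOpen_lt continuous_snd continuous_const).mem_nhds (by simp)
    refine continuousAt_of_dominated
      (bound := fun h => ∑ _i : Fin p, ((q.2 + 1) * nrm lam) ^ 2) ?_ ?_ ?_ ?_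
    · filter_upwards [hn] with r hr
      exact (int_RR_sq hl hm β r.1 (le_of_lt hr)).aestronglyMeasurable
    · filter_upwards [hn, hb] with r hr hr2
      refine Eventually.of_forall fun h => ?_
      refine (norm_sum_le _ _).trans (Finset.sum_le_sum fun i _ => ?_)
      rw [Real.norm_eq_abs, abs_pow]
      refine pow_le_pow_left₀ (abs_nonneg _) ?_ 2
      refine (RR_bd hl hm β r.1 (le_of_lt hr) h i).trans ?_
      exact mul_le_mul_of_nonneg_right hr2.le (nrm_nonneg _)
    · exact integrable_const _
    · refine Eventually.of_forall fun h => ?_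
      have : ContinuousOn (fun r : ℝ × ℝ => ∑ i, RR lam β r.1 r.2 h i ^ 2)
          {q : ℝ × ℝ | 0 < q.2} :=
        continuousOn_finsetSum _ fun i _ => (RR_joint hl hm β h i).pow 2
      exact this.continuousAt hn
  exact h1.neg.div (by fun_prop) fun q hq =>
    mul_ne_zero (mul_ne_zero two_ne_zero hp') (pow_ne_zero 2 (ne_of_gt hq))

end prob

theorem statement19 {p : ℕ} (hp : 1 ≤ p) (β lam : Fin p → ℝ)
    (hlam : ∀ i, 0 ≤ lam i) (hlamm : Monotone lam) :
    ConvexOn ℝ {cτ : ℝ × ℝ | 0 < cτ.2} (fun cτ => Fp lam β cτ.1 cτ.2) ∧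
    (∀ c τ : ℝ, 0 < τ →
      HasDerivAt (fun c' => Fp lam β c' τ) (FpDc lam β c τ) c) ∧
    (∀ c τ : ℝ, 0 < τ →
      HasDerivAt (fun τ' => Fp lam β c τ') (FpDτ lam β c τ) τ) ∧
    ContinuousOn (fun cτ : ℝ × ℝ => FpDc lam β cτ.1 cτ.2) {cτ : ℝ × ℝ | 0 < cτ.2} ∧
    ContinuousOn (fun cτ : ℝ × ℝ => FpDτ lam β cτ.1 cτ.2) {cτ : ℝ × ℝ | 0 < cτ.2} := by
  exact ⟨Fp_convex hlam hlamm β, fun c τ h => Fp_dc hlam hlamm β c hp h,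
    fun c τ h => Fp_dt hlam hlamm β c hp h, Dc_cont hlam hlamm β hp, Dt_cont hlam hlamm β hp⟩
end
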